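/- arXiv:2502.12313 — 14 statements merged into one kernel-verified Lean document; each statement's English description precedes it below -/
import Mathlib

section
/- Let F be a monotone hazard rate probability distribution supported on the non-negative reals with density f. Then Q_F ≥ V_F / 4, i.e., ∫₀^∞ z·(1−F(z))·f(z) dz ≥ (1/4)·∫₀^∞ z·f(z) dz. -/
open MeasureTheory Real Set

theorem aux_fin (g H : ℝ → ℝ) (hg : Continuous g) (hH0 : H 0 = 1)
    (hd : ∀ z, HasDerivAt H (-g z) z) (hpos : ∀ z, 0 ≤ z → 0 < H z)
    (hm : ∀ y z : ℝ, 0 ≤ y → y ≤ z → g y / H y ≤ g z / H z) (T : ℝ) (hT : 0 ≤ T)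
    (hHT : H T ≤ 1 / 2) :
    (1/4) * ∫ z in (0:ℝ)..T, z * g z ≤ ∫ z in (0:ℝ)..T, z * H z * g z := by
  have hHc : Continuous H := continuous_iff_continuousAt.2 fun z => (hd z).continuousAt
  have key : ∀ x, 0 ≤ x → H (2 * x) ≤ H x ^ 2 := by
    have hd2 : ∀ x, 0 ≤ x → HasDerivAt (fun x => 2 * Real.log (H x) - Real.log (H (2 * x)))
        (2 * (-g x / H x) - (-g (2*x) * (2 * 1)) / H (2 * x)) x := by
      intro x hx
      have h1 := ((hd x).log (hpos x hx).ne').const_mul 2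
      have h2 : HasDerivAt (fun x => H (2 * x)) (-g (2*x) * (2 * 1)) x :=
        HasDerivAt.comp x (hd (2*x)) ((hasDerivAt_id x).const_mul 2)
      exact h1.sub (h2.log (hpos _ (by linarith)).ne')
    have mono : MonotoneOn (fun x => 2 * Real.log (H x) - Real.log (H (2 * x))) (Ici 0) := by
      apply monotoneOn_of_deriv_nonneg (convex_Ici 0)
      · intro x hx
        exact (hd2 x hx).continuousAt.continuousWithinAt
      · intro x hx
        rw [interior_Ici] at hx
        exact (hd2 x (le_of_lt hx)).differentiableAt.differentiableWithinAt
      · intro x hx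
        rw [interior_Ici] at hx
        have hx' : 0 < x := hx
        rw [(hd2 x hx'.le).deriv]
        have := hm x (2*x) hx'.le (by linarith)
        have e : 2 * (-g x / H x) - (-g (2*x) * (2 * 1)) / H (2 * x)
          = 2 * (g (2*x) / H (2*x) - g x / H x) := by ring
        rw [e]; linarith
    intro x hx
    have := mono (show (0:ℝ) ∈ Ici (0:ℝ) from le_refl (0:ℝ)) (show x ∈ Ici (0:ℝ) from hx) hx
    simp only [mul_zero, hH0, Real.log_one, sub_zero] at this
    rw [← Real.log_le_log_iff (hpos _ (by linarith)) (pow_pos (hpos x hx) 2), Real.log_pow]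
    push_cast; linarith
  have e1 : ∫ z in (0:ℝ)..T, (H z - z * g z) = T * H T := by
    rw [intervalIntegral.integral_eq_sub_of_hasDerivAt (f := fun z => z * H z)]
    · simp
    · intro z _
      exact ((hasDerivAt_id' z).mul (hd z)).congr_deriv (by ring)
    · exact Continuous.intervalIntegrable (by fun_prop) _ _
  have e2 : ∫ z in (0:ℝ)..T, (H z ^ 2 - 2 * (z * H z * g z)) = T * H T ^ 2 := by
    rw [intervalIntegral.integral_eq_sub_of_hasDerivAt (f := fun z => z * H z ^ 2)]
    · simp
    · intro z _
      exact ((hasDerivAt_id' z).mul ((hd z).pow 2)).congr_deriv (by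
        simp only [Pi.pow_apply]; push_cast; ring)
    · exact Continuous.intervalIntegrable (by fun_prop) _ _
  rw [intervalIntegral.integral_sub (Continuous.intervalIntegrable (by fun_prop) _ _)
    (Continuous.intervalIntegrable (by fun_prop) _ _)] at e1 e2
  rw [intervalIntegral.integral_const_mul] at e2
  have e3 : ∫ z in (0:ℝ)..T, H z = 2 * ∫ x in (0:ℝ)..(T/2), H (2 * x) := by
    rw [intervalIntegral.integral_comp_mul_left H (by norm_num : (2:ℝ) ≠ 0)]
    simp [mul_div_cancel₀]
  have e4 : ∫ x in (0:ℝ)..(T/2), H (2 * x) ≤ ∫ x in (0:ℝ)..(T/2), H x ^ 2 := by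
    apply intervalIntegral.integral_mono_on (by linarith)
      (Continuous.intervalIntegrable (by fun_prop) _ _)
      (Continuous.intervalIntegrable (by fun_prop) _ _)
    intro x hx
    exact key x hx.1
  have e5 : ∫ x in (0:ℝ)..(T/2), H x ^ 2 ≤ ∫ x in (0:ℝ)..T, H x ^ 2 := by
    apply intervalIntegral.integral_mono_interval le_rfl (by linarith) (by linarith)
    · exact Filter.Eventually.of_forall fun x => sq_nonneg _
    · exact (Continuous.intervalIntegrable (by fun_prop) _ _)
  have e6 : 0 ≤ T * H T * (1 / 2 - H T) :=
    mul_nonneg (mul_nonneg hT (hpos T hT).le) (by linarith)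
  nlinarith

theorem stmt_0
(f F : ℝ → ℝ)
    (hf_cont : ContinuousOn f (Ici 0))
    (hf_pos : ∀ z ∈ Ici (0:ℝ), 0 < f z)
    (hF : ∀ z ∈ Ici (0:ℝ), F z = ∫ t in (0:ℝ)..z, f t)
    (hF_lt : ∀ z ∈ Ici (0:ℝ), F z < 1)
    (hprob : ∫ z in Ioi (0:ℝ), f z = 1)
(hMHR : ∀ y z : ℝ, 0 ≤ y → y ≤ z → f y / (1 - F y) ≤ f z / (1 - F z))
(hmean : IntegrableOn (fun z => z * f z) (Ioi 0)) :
    ∫ z in Ioi (0:ℝ), z * (1 - F z) * f z ≥ (1/4) * ∫ z in Ioi (0:ℝ), z * f z := by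
  have hint : IntegrableOn f (Ioi 0) := by
    by_contra h
    rw [integral_undef h] at hprob
    norm_num at hprob
  set g : ℝ → ℝ := fun t => f (max t 0) with hgdef
  have hg : Continuous g :=
    hf_cont.comp_continuous (by fun_prop) (fun x => mem_Ici.2 (le_max_right _ _))
  have hgf : ∀ z, 0 ≤ z → g z = f z := fun z hz => by simp [hgdef, max_eq_left hz]
  set H : ℝ → ℝ := fun z => 1 - ∫ t in (0:ℝ)..z, g t with hHdef
  have hd : ∀ z, HasDerivAt H (-g z) z := fun z =>
    (hg.integral_hasStrictDerivAt 0 z).hasDerivAt.const_sub 1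
  have hHc : Continuous H := continuous_iff_continuousAt.2 fun z => (hd z).continuousAt
  have hHF : ∀ z, 0 ≤ z → H z = 1 - F z := by
    intro z hz
    rw [hF z hz, hHdef]
    simp only
    congr 1
    apply intervalIntegral.integral_congr
    intro t ht
    rw [uIcc_of_le hz] at ht
    exact hgf t ht.1
  have hF0 : ∀ z, 0 ≤ z → 0 ≤ F z := by
    intro z hz
    rw [hF z hz]
    exact intervalIntegral.integral_nonneg hz fun t ht => (hf_pos t ht.1).le
  have hFlim : Filter.Tendsto H Filter.atTop (nhds 0) := by
    have h := intervalIntegral_tendsto_integral_Ioi 0 hint Filter.tendsto_id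
    rw [hprob] at h
    have h2 := h.const_sub 1
    rw [sub_self] at h2
    refine h2.congr' ?_
    filter_upwards [Filter.eventually_ge_atTop 0] with z hz
    rw [hHF z hz, hF z hz]; rfl
  have hint2 : IntegrableOn (fun z => z * H z * g z) (Ioi 0) := by
    refine Integrable.mono hmean (Continuous.aestronglyMeasurable (by fun_prop)) ?_
    refine (ae_restrict_iff' measurableSet_Ioi).2 (Filter.Eventually.of_forall ?_)
    intro z hz
    have hz' : 0 ≤ z := le_of_lt hz
    rw [hgf z hz', hHF z hz', norm_mul, norm_mul, norm_mul]
    have : ‖1 - F z‖ ≤ 1 := by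
      rw [Real.norm_eq_abs, abs_le]
      constructor <;> linarith [hF0 z hz', hF_lt z hz']
    calc ‖z‖ * ‖1 - F z‖ * ‖f z‖ ≤ ‖z‖ * 1 * ‖f z‖ := by gcongr
      _ = _ := by ring
  have hmean2 : IntegrableOn (fun z => z * g z) (Ioi 0) :=
    hmean.congr_fun (fun z hz => by simp only [hgf z (le_of_lt hz)]) measurableSet_Ioi
  have r1 : ∫ z in Ioi (0:ℝ), z * (1 - F z) * f z = ∫ z in Ioi (0:ℝ), z * H z * g z :=
    setIntegral_congr_fun measurableSet_Ioi fun z hz => by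
      simp only [hgf z (le_of_lt hz), hHF z (le_of_lt hz)]
  have r2 : ∫ z in Ioi (0:ℝ), z * f z = ∫ z in Ioi (0:ℝ), z * g z :=
    setIntegral_congr_fun measurableSet_Ioi fun z hz => by
      simp only [hgf z (le_of_lt hz)]
  rw [r1, r2, ge_iff_le]
  refine le_of_tendsto_of_tendsto
    ((intervalIntegral_tendsto_integral_Ioi 0 hmean2 Filter.tendsto_id).const_mul (1/4))
    (intervalIntegral_tendsto_integral_Ioi 0 hint2 Filter.tendsto_id) ?_
  filter_upwards [Filter.eventually_ge_atTop 0,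
    hFlim.eventually (ge_mem_nhds (show (0:ℝ) < 1/2 by norm_num))] with T hT hHT
  refine aux_fin g H hg (by simp [hHdef]) hd ?_ ?_ T hT hHT
  · intro z hz
    rw [hHF z hz]; linarith [hF_lt z hz]
  · intro y z hy hyz
    rw [hHF z (hy.trans hyz), hHF y hy, hgf y hy, hgf z (hy.trans hyz)]
    exact hMHR y z hy hyz
end

section
/- Let F be a monotone hazard rate probability distribution supported on the non-negative reals with density f and strictly increasing virtual valuation φ. Then R*_F ≥ V_F / e, i.e., φ⁻¹(0)·(1−F(φ⁻¹(0))) ≥ (1/e)·∫₀^∞ z·f(z) dz. -/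
open MeasureTheory Real Set

theorem stmt_1
(f F : ℝ → ℝ)
    (hf_cont : ContinuousOn f (Ici 0))
    (hf_pos : ∀ z ∈ Ici (0:ℝ), 0 < f z)
    (hF : ∀ z ∈ Ici (0:ℝ), F z = ∫ t in (0:ℝ)..z, f t)
    (hF_lt : ∀ z ∈ Ici (0:ℝ), F z < 1)
    (hprob : ∫ z in Ioi (0:ℝ), f z = 1)
(hMHR : ∀ y z : ℝ, 0 ≤ y → y ≤ z → f y / (1 - F y) ≤ f z / (1 - F z))
(φ ψ : ℝ → ℝ)
    (hφ : ∀ z ∈ Ici (0:ℝ), φ z = z - (1 - F z) / f z)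
    (hφ_mono : StrictMonoOn φ (Ici 0))
    (hφ_top : Filter.Tendsto φ Filter.atTop Filter.atTop)
    (hψ : ∀ y ∈ Ici (0:ℝ), ψ y ∈ Ici (0:ℝ) ∧ φ (ψ y) = y)
(hmean : IntegrableOn (fun z => z * f z) (Ioi 0)) :
    ψ 0 * (1 - F (ψ 0)) ≥ (1 / Real.exp 1) * ∫ z in Ioi (0:ℝ), z * f z := by
  set g : ℝ → ℝ := fun z => f (max z 0) with hg
  have hgc : Continuous g := by
    refine hf_cont.comp_continuous (f := fun z : ℝ => max z 0) (by fun_prop) ?_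
    intro x; exact mem_Ici.2 (le_max_right x 0)
  have hgf : ∀ z, 0 ≤ z → g z = f z := fun z hz => by simp [hg, max_eq_left hz]
  set S : ℝ → ℝ := fun z => 1 - ∫ t in (0:ℝ)..z, g t with hS
  have hSF : ∀ z, 0 ≤ z → 1 - F z = S z := by
    intro z hz
    rw [hF z hz, hS]
    congr 1
    apply intervalIntegral.integral_congr
    intro t ht
    rw [uIcc_of_le hz] at ht
    exact (hgf t ht.1).symm
  have hSd : ∀ z, HasDerivAt S (-g z) z := fun z => by
    simpa using (hgc.integral_hasStrictDerivAt 0 z).hasDerivAt.const_sub 1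
  have hSpos : ∀ z, 0 ≤ z → 0 < S z := fun z hz => by
    rw [← hSF z hz]; linarith [hF_lt z hz]
  have hhm : ∀ y z, 0 ≤ y → y ≤ z → g y / S y ≤ g z / S z := fun y z hy hyz => by
    have hz := hy.trans hyz
    rw [← hSF y hy, ← hSF z hz, hgf y hy, hgf z hz]; exact hMHR y z hy hyz
  obtain ⟨hr0, hr⟩ := hψ 0 (mem_Ici.2 le_rfl)
  set r := ψ 0
  have hr0' : 0 ≤ r := hr0
  have hfr := hf_pos r hr0
  rw [hφ r hr0, hSF r hr0', ← hgf r hr0'] at hr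
  rw [← hgf r hr0'] at hfr
  have hSr := hSpos r hr0'
  have hre : r = S r / g r := by linarith
  have hrp : 0 < r := by rw [hre]; positivity
  have hhr : g r / S r = 1 / r := by
    rw [eq_div_iff hrp.ne']
    nth_rw 3 [hre]
    field_simp
  set E : ℝ → ℝ := fun z => S z * exp (z / r) with hE
  have hexpd : ∀ z, HasDerivAt (fun z => exp (z / r)) (exp (z / r) * (1 / r)) z := fun z =>
    ((hasDerivAt_id z).div_const r).exp
  have hEd : ∀ z, HasDerivAt E (-g z * exp (z / r) + S z * (exp (z / r) * (1 / r))) z := fun z =>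
    (hSd z).mul (hexpd z)
  have hEc : Continuous E := continuous_iff_continuousAt.2 fun z => (hEd z).continuousAt
  have hEeq : ∀ z, 0 ≤ z → -g z * exp (z / r) + S z * (exp (z / r) * (1 / r))
      = (S z * exp (z / r)) * (g r / S r - g z / S z) := fun z hz => by
    rw [hhr]
    have := (hSpos z hz).ne'
    field_simp
    ring
  have hEle : ∀ z, 0 ≤ z → E z ≤ E r := by
    intro z hz
    rcases le_total z r with h | h
    · have : MonotoneOn E (Icc 0 r) := by
        apply monotoneOn_of_deriv_nonneg (convex_Icc 0 r) hEc.continuousOn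
        · intro x _; exact (hEd x).differentiableAt.differentiableWithinAt
        · intro x hx
          rw [interior_Icc] at hx
          rw [(hEd x).deriv, hEeq x hx.1.le]
          have := hSpos x hx.1.le
          have := hhm x r hx.1.le hx.2.le
          exact mul_nonneg (by positivity) (by linarith)
      exact this ⟨hz, h⟩ ⟨hr0', le_rfl⟩ h
    · have : AntitoneOn E (Ici r) := by
        apply antitoneOn_of_deriv_nonpos (convex_Ici r) hEc.continuousOn
        · intro x _; exact (hEd x).differentiableAt.differentiableWithinAt
        · intro x hx
          rw [interior_Ici] at hx
          have hx' : r ≤ x := le_of_lt hx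
          have hx0 := hr0'.trans hx'
          rw [(hEd x).deriv, hEeq x hx0]
          have := hSpos x hx0
          have := hhm r x hr0' hx'
          exact mul_nonpos_of_nonneg_of_nonpos (by positivity) (by linarith)
      exact this (mem_Ici.2 le_rfl) (mem_Ici.2 h) h
  have hEr : E r = S r * exp 1 := by simp [hE, div_self hrp.ne']
  set D : ℝ → ℝ := fun N => (∫ z in (0:ℝ)..N, z * g z) + N * S N + r * E r * (exp (N / r))⁻¹ with hD
  have hDd : ∀ z, HasDerivAt D (z * g z + (1 * S z + z * (-g z))
      + r * E r * (-(exp (z / r) * (1 / r)) / (exp (z / r)) ^ 2)) z := fun z =>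
    ((((continuous_id.mul hgc).integral_hasStrictDerivAt 0 z).hasDerivAt).add
      ((hasDerivAt_id z).mul (hSd z))).add (((hexpd z).inv (exp_pos _).ne').const_mul _)
  have hDanti : AntitoneOn D (Ici 0) := by
    apply antitoneOn_of_deriv_nonpos (convex_Ici 0)
    · exact fun x _ => (hDd x).continuousAt.continuousWithinAt
    · intro x _; exact (hDd x).differentiableAt.differentiableWithinAt
    · intro x hx
      rw [interior_Ici] at hx
      have hx' : 0 ≤ x := le_of_lt hx
      rw [(hDd x).deriv]
      have h1 := hEle x hx'
      have h2 : x * g x + (1 * S x + x * (-g x))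
          + r * E r * (-(exp (x / r) * (1 / r)) / (exp (x / r)) ^ 2)
          = (E x - E r) * (exp (x / r))⁻¹ := by
        have h3 : E x = S x * exp (x / r) := rfl
        rw [h3]
        generalize E r = e
        have := (exp_pos (x / r)).ne'
        field_simp
        ring
      rw [h2]
      exact mul_nonpos_of_nonpos_of_nonneg (by linarith) (by positivity)
  have hD0 : D 0 = r * E r := by simp [hD]
  have hfin : ∀ N, 0 ≤ N → (∫ z in (0:ℝ)..N, z * f z) ≤ r * E r := by
    intro N hN
    have h1 : D N ≤ D 0 := hDanti (mem_Ici.2 le_rfl) (mem_Ici.2 hN) hN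
    have h2 : (∫ z in (0:ℝ)..N, z * f z) = ∫ z in (0:ℝ)..N, z * g z := by
      apply intervalIntegral.integral_congr
      intro t ht
      rw [uIcc_of_le hN] at ht
      simp only [hgf t ht.1]
    rw [hD0] at h1
    have h3 := hSpos N hN
    have h4 : 0 ≤ r * E r * (exp (N / r))⁻¹ := by rw [hEr]; positivity
    have h5 : 0 ≤ N * S N := by positivity
    simp only [hD] at h1
    linarith
  have hlim := intervalIntegral_tendsto_integral_Ioi 0 hmean Filter.tendsto_id
  have hV : ∫ z in Ioi (0:ℝ), z * f z ≤ r * E r :=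
    le_of_tendsto hlim (Filter.eventually_atTop.2 ⟨0, fun N hN => hfin N hN⟩)
  rw [hSF r hr0', ge_iff_le, one_div, inv_mul_le_iff₀ (exp_pos 1)]
  rw [hEr] at hV
  linarith
end

section
/- Let F be a monotone hazard rate probability distribution supported on the non-negative reals with density f and strictly increasing virtual valuation φ. Then for every z ≥ 0, F(φ⁻¹(z)) ≤ 1 − (1/e)·(1−F(z)). -/
open MeasureTheory Real Set

theorem stmt_2
(f F : ℝ → ℝ)
    (hf_cont : ContinuousOn f (Ici 0))
    (hf_pos : ∀ z ∈ Ici (0:ℝ), 0 < f z)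
    (hF : ∀ z ∈ Ici (0:ℝ), F z = ∫ t in (0:ℝ)..z, f t)
    (hF_lt : ∀ z ∈ Ici (0:ℝ), F z < 1)
    (hprob : ∫ z in Ioi (0:ℝ), f z = 1)
(hMHR : ∀ y z : ℝ, 0 ≤ y → y ≤ z → f y / (1 - F y) ≤ f z / (1 - F z))
(φ ψ : ℝ → ℝ)
    (hφ : ∀ z ∈ Ici (0:ℝ), φ z = z - (1 - F z) / f z)
    (hφ_mono : StrictMonoOn φ (Ici 0))
    (hφ_top : Filter.Tendsto φ Filter.atTop Filter.atTop)
    (hψ : ∀ y ∈ Ici (0:ℝ), ψ y ∈ Ici (0:ℝ) ∧ φ (ψ y) = y) :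
    ∀ z : ℝ, 0 ≤ z → F (ψ z) ≤ 1 - (1 / Real.exp 1) * (1 - F z) := by
  intro z hz
  obtain ⟨hw0, hw⟩ := hψ z hz
  set w := ψ z with hwdef
  have hw0' : (0:ℝ) ≤ w := hw0
  have hfw := hf_pos w hw0
  have hFw := hF_lt w hw0
  rw [hφ w hw0] at hw
  have hpos : 0 < (1 - F w) / f w := div_pos (by linarith) hfw
  have hzw : z ≤ w := by linarith
  set H := f w / (1 - F w) with hH
  have hHw : H * (w - z) = 1 := by
    have h1 : w - z = (1 - F w) / f w := by linarith
    have h2 : (1 - F w) ≠ 0 := by linarith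
    rw [h1, hH]
    field_simp
  have hg : Continuous (fun t : ℝ => f (max t 0)) :=
    hf_cont.comp_continuous (by fun_prop) (fun t => le_max_right t 0)
  have hFg : ∀ x : ℝ, 0 ≤ x → F x = ∫ t in (0:ℝ)..x, f (max t 0) := by
    intro x hx
    rw [hF x hx]
    apply intervalIntegral.integral_congr
    intro t ht
    rw [uIcc_of_le hx] at ht
    simp [max_eq_left ht.1]
  have hd : ∀ x : ℝ, HasDerivAt
      (fun x => (1 - ∫ t in (0:ℝ)..x, f (max t 0)) * Real.exp (H * x))
      ((-f (max x 0)) * Real.exp (H * x)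
        + (1 - ∫ t in (0:ℝ)..x, f (max t 0)) * (Real.exp (H * x) * (H * 1))) x := by
    intro x
    have h1 : HasDerivAt (fun x => ∫ t in (0:ℝ)..x, f (max t 0)) (f (max x 0)) x :=
      hg.integral_hasStrictDerivAt 0 x |>.hasDerivAt
    exact (h1.const_sub 1).mul (((hasDerivAt_id x).const_mul H).exp)
  have hmono : MonotoneOn
      (fun x => (1 - ∫ t in (0:ℝ)..x, f (max t 0)) * Real.exp (H * x)) (Icc z w) := by
    apply monotoneOn_of_deriv_nonneg (convex_Icc z w)
    · exact fun x _ => (hd x).continuousAt.continuousWithinAt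
    · exact fun x _ => (hd x).differentiableAt.differentiableWithinAt
    · intro x hx
      rw [interior_Icc] at hx
      have hx0 : 0 ≤ x := by linarith [hx.1]
      rw [(hd x).deriv, ← hFg x hx0, max_eq_left hx0]
      have h1 := hMHR x w hx0 hx.2.le
      rw [← hH, div_le_iff₀ (by linarith [hF_lt x hx0])] at h1
      have h2 := mul_nonneg (sub_nonneg.2 h1) (Real.exp_pos (H * x)).le
      linarith
  have h := hmono (left_mem_Icc.2 hzw) (right_mem_Icc.2 hzw) hzw
  simp only at h
  rw [← hFg z hz, ← hFg w hw0'] at h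
  have e : H * w = H * z + 1 := by linarith
  rw [e, Real.exp_add] at h
  have h3 : 1 - F z ≤ (1 - F w) * Real.exp 1 := by
    have := Real.exp_pos (H * z)
    nlinarith
  have h4 : 1 / Real.exp 1 * (1 - F z) ≤ 1 - F w := by
    rw [one_div_mul_eq_div, div_le_iff₀ (Real.exp_pos 1)]
    exact h3
  linarith
end

section
/- Let F be a monotone hazard rate probability distribution supported on the non-negative reals with density f, hazard rate h, and strictly increasing virtual valuation φ. Then for every z ≥ 0, the integral of the hazard rate from z to φ⁻¹(z) is at most 1: ∫_z^{φ⁻¹(z)} h(y) dy ≤ 1. -/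
open MeasureTheory Real Set

theorem stmt_3
(f F : ℝ → ℝ)
    (hf_cont : ContinuousOn f (Ici 0))
    (hf_pos : ∀ z ∈ Ici (0:ℝ), 0 < f z)
    (hF : ∀ z ∈ Ici (0:ℝ), F z = ∫ t in (0:ℝ)..z, f t)
    (hF_lt : ∀ z ∈ Ici (0:ℝ), F z < 1)
    (hprob : ∫ z in Ioi (0:ℝ), f z = 1)
(hMHR : ∀ y z : ℝ, 0 ≤ y → y ≤ z → f y / (1 - F y) ≤ f z / (1 - F z))
(φ ψ : ℝ → ℝ)
    (hφ : ∀ z ∈ Ici (0:ℝ), φ z = z - (1 - F z) / f z)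
    (hφ_mono : StrictMonoOn φ (Ici 0))
    (hφ_top : Filter.Tendsto φ Filter.atTop Filter.atTop)
    (hψ : ∀ y ∈ Ici (0:ℝ), ψ y ∈ Ici (0:ℝ) ∧ φ (ψ y) = y) :
    ∀ z : ℝ, 0 ≤ z → ∫ y in z..(ψ z), f y / (1 - F y) ≤ 1 := by
  intro z hz
  obtain ⟨hw, hφw⟩ := hψ z hz
  rw [hφ _ hw] at hφw
  have hfw := hf_pos _ hw
  have hFw := hF_lt _ hw
  generalize ψ z = w at *
  have h1 : 0 < (1 - F w) / f w := div_pos (by linarith) hfw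
  have hzw : z ≤ w := by linarith
  have hint : IntervalIntegrable (fun y => f y / (1 - F y)) volume z w := by
    apply MonotoneOn.intervalIntegrable
    rw [uIcc_of_le hzw]
    intro a ha b _ hab
    exact hMHR a b (hz.trans ha.1) hab
  have hle : ∫ y in z..w, f y / (1 - F y) ≤ ∫ _y in z..w, f w / (1 - F w) := by
    apply intervalIntegral.integral_mono_on hzw hint (by simp)
    intro x hx
    exact hMHR x w (hz.trans hx.1) hx.2
  refine hle.trans (le_of_eq ?_)
  rw [intervalIntegral.integral_const, smul_eq_mul]
  have h2 : w - z = (1 - F w) / f w := by linarith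
  have h3 : 1 - F w ≠ 0 := by linarith
  rw [h2]
  field_simp
end

section
/- Let F be a monotone hazard rate probability distribution supported on the non-negative reals with density f and strictly increasing virtual valuation φ. Then R^s_F ≥ A_F + V_F/(4e), where R^s_F = ∫₀^∞ φ⁻¹(z)·(1−F(φ⁻¹(z)))·f(z) dz. (This is the expected revenue of the optimal-consistency mechanism when the prediction for the profiled agent is incorrect and no revenue is extracted from her.) -/
open MeasureTheory Real Set

lemma aux_log (g S : ℝ → ℝ) (hS : ∀ z, HasDerivAt S (-g z) z)
    (hpos : ∀ z, 0 ≤ z → 0 < S z) (z : ℝ) (hz : 0 ≤ z) :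
    HasDerivAt (fun t => -Real.log (S t)) (g z / S z) z := by
  have := ((hS z).log (hpos z hz).ne').neg
  exact this.congr_deriv (by ring)

lemma aux_A (g S : ℝ → ℝ) (hS : ∀ z, HasDerivAt S (-g z) z)
    (hpos : ∀ z, 0 ≤ z → 0 < S z)
    (hm : ∀ y z : ℝ, 0 ≤ y → y ≤ z → g y / S y ≤ g z / S z)
    (a b : ℝ) (ha : 0 ≤ a) (hab : a ≤ b) (h1 : (b - a) * (g b / S b) = 1) :
    S a * Real.exp (-1) ≤ S b := by
  have key := (convex_Icc a b).image_sub_le_mul_sub_of_deriv_le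
    (f := fun t => -Real.log (S t)) (C := g b / S b)
    (fun x hx => (aux_log g S hS hpos x (ha.trans hx.1)).continuousAt.continuousWithinAt)
    (fun x hx => by
      rw [interior_Icc] at hx
      exact (aux_log g S hS hpos x (ha.trans hx.1.le)).differentiableAt.differentiableWithinAt)
    (fun x hx => by
      rw [interior_Icc] at hx
      rw [(aux_log g S hS hpos x (ha.trans hx.1.le)).deriv]
      exact hm x b (ha.trans hx.1.le) hx.2.le)
    a (left_mem_Icc.2 hab) b (right_mem_Icc.2 hab) hab
  have hle : Real.log (S a) + (-1) ≤ Real.log (S b) := by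
    linarith
  have := Real.exp_le_exp.2 hle
  rwa [Real.exp_add, Real.exp_log (hpos a ha), Real.exp_log (hpos b (ha.trans hab))] at this

lemma aux_B (g S : ℝ → ℝ) (hS : ∀ z, HasDerivAt S (-g z) z) (h0 : S 0 = 1)
    (hpos : ∀ z, 0 ≤ z → 0 < S z)
    (hm : ∀ y z : ℝ, 0 ≤ y → y ≤ z → g y / S y ≤ g z / S z)
    (T : ℝ) (hT : 0 ≤ T) : S (2 * T) ≤ S T ^ 2 := by
  have hd : ∀ x : ℝ, 0 ≤ x → HasDerivAt (fun t => -Real.log (S (2 * t)) - 2 * (-Real.log (S t)))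
      (g (2 * x) / S (2 * x) * 2 - 2 * (g x / S x)) x := by
    intro x hx
    have h2 : HasDerivAt (fun t : ℝ => 2 * t) 2 x := by
      simpa using (hasDerivAt_id x).const_mul 2
    have := (aux_log g S hS hpos (2 * x) (by linarith)).comp x h2
    exact this.sub ((aux_log g S hS hpos x hx).const_mul 2)
  have mono : MonotoneOn (fun t => -Real.log (S (2 * t)) - 2 * (-Real.log (S t))) (Ici 0) := by
    apply monotoneOn_of_deriv_nonneg (convex_Ici 0)
    · exact fun x hx => (hd x hx).continuousAt.continuousWithinAt
    · intro x hx
      rw [interior_Ici] at hx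
      exact (hd x (le_of_lt hx)).differentiableAt.differentiableWithinAt
    · intro x hx
      rw [interior_Ici] at hx
      have hx' : 0 ≤ x := le_of_lt hx
      rw [(hd x hx').deriv]
      have := hm x (2 * x) hx' (by linarith)
      linarith
  have := mono (self_mem_Ici) (show T ∈ Ici (0:ℝ) from hT) hT
  simp only [mul_zero, h0, Real.log_one] at this
  have hle : Real.log (S (2 * T)) ≤ Real.log (S T) + Real.log (S T) := by linarith
  have := Real.exp_le_exp.2 hle
  rw [Real.exp_add, Real.exp_log (hpos T hT), Real.exp_log (hpos (2 * T) (by linarith))] at this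
  rw [sq]; exact this

lemma aux_C (g S : ℝ → ℝ) (hg : Continuous g) (hS : ∀ z, HasDerivAt S (-g z) z) (h0 : S 0 = 1)
    (hpos : ∀ z, 0 ≤ z → 0 < S z)
    (hm : ∀ y z : ℝ, 0 ≤ y → y ≤ z → g y / S y ≤ g z / S z)
    (T : ℝ) (hT : 0 ≤ T) :
    (1 / 4) * (∫ z in (0:ℝ)..(2 * T), z * g z) ≤ (∫ z in (0:ℝ)..T, z * S z * g z) + T * S T ^ 2 / 2 := by
  have hSc : Continuous S := continuous_iff_continuousAt.2 fun z => (hS z).continuousAt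
  have hd : ∀ x : ℝ, HasDerivAt (fun t => (∫ z in (0:ℝ)..t, z * S z * g z) + t * S t ^ 2 / 2
      - (1 / 4) * (∫ z in (0:ℝ)..(2 * t), z * g z) - t * S (2 * t) / 2)
      ((S x ^ 2 - S (2 * x)) / 2) x := by
    intro x
    have h2 : HasDerivAt (fun t : ℝ => 2 * t) 2 x := by
      simpa using (hasDerivAt_id x).const_mul 2
    have c1 : Continuous fun z => z * S z * g z := by fun_prop
    have c2 : Continuous fun z => z * g z := by fun_prop
    have a1 := c1.integral_hasStrictDerivAt 0 x |>.hasDerivAt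
    have a2 := (c2.integral_hasStrictDerivAt 0 (2 * x) |>.hasDerivAt).comp x h2
    have a3 := (((hasDerivAt_id x).mul ((hS x).pow 2))).div_const 2
    have a4 := (((hasDerivAt_id x).mul ((hS (2 * x)).comp x h2))).div_const 2
    have := ((a1.add a3).sub (a2.const_mul (1 / 4))).sub a4
    refine this.congr_deriv ?_
    simp
    ring
  have mono : MonotoneOn (fun t => (∫ z in (0:ℝ)..t, z * S z * g z) + t * S t ^ 2 / 2
      - (1 / 4) * (∫ z in (0:ℝ)..(2 * t), z * g z) - t * S (2 * t) / 2) (Ici 0) := by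
    apply monotoneOn_of_deriv_nonneg (convex_Ici 0)
    · exact fun x hx => (hd x).continuousAt.continuousWithinAt
    · intro x hx
      exact (hd x).differentiableAt.differentiableWithinAt
    · intro x hx
      rw [interior_Ici] at hx
      rw [(hd x).deriv]
      have := aux_B g S hS h0 hpos hm x (le_of_lt hx)
      linarith
  have := mono (self_mem_Ici) (show T ∈ Ici (0:ℝ) from hT) hT
  simp only [mul_zero, intervalIntegral.integral_same, zero_mul, zero_div, add_zero, sub_zero] at this
  have h3 := mul_nonneg hT (hpos (2 * T) (by linarith)).le
  linarith

theorem stmt_5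
(f F : ℝ → ℝ)
    (hf_cont : ContinuousOn f (Ici 0))
    (hf_pos : ∀ z ∈ Ici (0:ℝ), 0 < f z)
    (hF : ∀ z ∈ Ici (0:ℝ), F z = ∫ t in (0:ℝ)..z, f t)
    (hF_lt : ∀ z ∈ Ici (0:ℝ), F z < 1)
    (hprob : ∫ z in Ioi (0:ℝ), f z = 1)
(hMHR : ∀ y z : ℝ, 0 ≤ y → y ≤ z → f y / (1 - F y) ≤ f z / (1 - F z))
(φ ψ : ℝ → ℝ)
    (hφ : ∀ z ∈ Ici (0:ℝ), φ z = z - (1 - F z) / f z)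
    (hφ_mono : StrictMonoOn φ (Ici 0))
    (hφ_top : Filter.Tendsto φ Filter.atTop Filter.atTop)
    (hψ : ∀ y ∈ Ici (0:ℝ), ψ y ∈ Ici (0:ℝ) ∧ φ (ψ y) = y)
(hmean : IntegrableOn (fun z => z * f z) (Ioi 0)) :
    ∫ z in Ioi (0:ℝ), ψ z * (1 - F (ψ z)) * f z
      ≥ (∫ z in Ioi (0:ℝ), (ψ z - z) * (1 - F (ψ z)) * f z)
        + (1 / (4 * Real.exp 1)) * ∫ z in Ioi (0:ℝ), z * f z := by
  set g : ℝ → ℝ := fun z => f (max z 0) with hgdef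
  have hg : Continuous g :=
    hf_cont.comp_continuous (by fun_prop) (fun x => mem_Ici.2 (le_max_right _ _))
  have hgf : ∀ z, 0 ≤ z → g z = f z := fun z hz => by simp [hgdef, max_eq_left hz]
  set S : ℝ → ℝ := fun z => 1 - ∫ t in (0:ℝ)..z, g t with hSdef
  have hS : ∀ z, HasDerivAt S (-g z) z := fun z => by
    have := (hg.integral_hasStrictDerivAt 0 z).hasDerivAt.const_sub 1
    exact this
  have hSF : ∀ z, 0 ≤ z → 1 - F z = S z := fun z hz => by
    simp only [hSdef]
    rw [hF z hz]
    congr 1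
    apply intervalIntegral.integral_congr
    intro t ht
    rw [uIcc_of_le hz] at ht
    exact (hgf t ht.1).symm
  have h0 : S 0 = 1 := by simp [hSdef]
  have hpos : ∀ z, 0 ≤ z → 0 < S z := fun z hz => by
    rw [← hSF z hz]; linarith [hF_lt z hz]
  have hm : ∀ y z : ℝ, 0 ≤ y → y ≤ z → g y / S y ≤ g z / S z := fun y z hy hyz => by
    rw [← hSF y hy, ← hSF z (hy.trans hyz), hgf y hy, hgf z (hy.trans hyz)]
    exact hMHR y z hy hyz
  have hSc : Continuous S := continuous_iff_continuousAt.2 fun z => (hS z).continuousAt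
  have hfint : IntegrableOn f (Ioi 0) := by
    by_contra hcon
    rw [integral_undef hcon] at hprob
    norm_num at hprob
  have hgint : IntegrableOn g (Ioi 0) :=
    hfint.congr_fun (fun z hz => (hgf z (le_of_lt hz)).symm) measurableSet_Ioi
  have hmeang : IntegrableOn (fun z => z * g z) (Ioi 0) :=
    hmean.congr_fun (fun z hz => by simp only [hgf z (le_of_lt hz)]) measurableSet_Ioi
  have hprobg : ∫ z in Ioi (0:ℝ), g z = 1 := by
    rw [← hprob]
    exact setIntegral_congr_fun measurableSet_Ioi (fun z hz => hgf z (le_of_lt hz))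
  have hVg : ∫ z in Ioi (0:ℝ), z * g z = ∫ z in Ioi (0:ℝ), z * f z :=
    setIntegral_congr_fun measurableSet_Ioi (fun z hz => by simp only [hgf z (le_of_lt hz)])
  have hgpos : ∀ z, 0 < g z := fun z => hf_pos _ (mem_Ici.2 (le_max_right _ _))
  have hsplit : ∀ (k : ℝ → ℝ), IntegrableOn k (Ioi 0) → ∀ T, 0 ≤ T →
      ∫ z in Ioi T, k z = (∫ z in Ioi (0:ℝ), k z) - ∫ z in (0:ℝ)..T, k z := by
    intro k hk T hT
    have := intervalIntegral.integral_interval_add_Ioi hk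
      (hk.mono_set (Ioi_subset_Ioi hT))
    linarith
  have htail : ∀ T, 0 ≤ T → T * S T ≤ (∫ z in Ioi (0:ℝ), z * g z) - ∫ z in (0:ℝ)..T, z * g z := by
    intro T hT
    rw [← hsplit _ hmeang T hT]
    have : S T = ∫ z in Ioi T, g z := by
      rw [hsplit _ hgint T hT, hprobg]
    rw [this, ← integral_const_mul]
    apply setIntegral_mono_on
    · exact (hgint.mono_set (Ioi_subset_Ioi hT)).const_mul T
    · exact hmeang.mono_set (Ioi_subset_Ioi hT)
    · exact measurableSet_Ioi
    · intro x hx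
      exact mul_le_mul_of_nonneg_right (le_of_lt hx) (hgpos x).le
  have hSle : ∀ T, 0 ≤ T → S T ≤ 1 := fun T hT => by
    have : 0 ≤ ∫ t in (0:ℝ)..T, g t :=
      intervalIntegral.integral_nonneg hT (fun u _ => (hgpos u).le)
    simp only [hSdef]; linarith
  have hbd : ∀ T, 0 ≤ T → T * S T ≤ ∫ z in Ioi (0:ℝ), z * g z := fun T hT => by
    have : 0 ≤ ∫ t in (0:ℝ)..T, t * g t :=
      intervalIntegral.integral_nonneg hT (fun u hu => mul_nonneg hu.1 (hgpos u).le)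
    linarith [htail T hT]
  have hint1 : IntegrableOn (fun z => z * S z * g z) (Ioi 0) := by
    refine Integrable.mono' hmeang
      (by fun_prop : Continuous fun z => z * S z * g z).aestronglyMeasurable ?_
    refine (ae_restrict_iff' measurableSet_Ioi).2 (Filter.Eventually.of_forall fun z hz => ?_)
    have hz : 0 < z := hz
    have a := hpos z hz.le
    have b := hSle z hz.le
    have c := hgpos z
    rw [Real.norm_of_nonneg (by positivity)]
    nlinarith [mul_nonneg (mul_pos hz c).le (sub_nonneg.2 b)]
  -- limit
  have hV4 : (1 / 4) * (∫ z in Ioi (0:ℝ), z * g z) ≤ ∫ z in Ioi (0:ℝ), z * S z * g z := by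
    have t1 := intervalIntegral_tendsto_integral_Ioi 0 hmeang Filter.tendsto_id
    have t2 := intervalIntegral_tendsto_integral_Ioi 0 hmeang
      (Filter.tendsto_id.const_mul_atTop (show (0:ℝ) < 2 by norm_num))
    have t3 := intervalIntegral_tendsto_integral_Ioi 0 hint1 Filter.tendsto_id
    have t4 := t3.add ((t1.const_sub (∫ z in Ioi (0:ℝ), z * g z)).div_const 2)
    simp only [sub_self, zero_div, add_zero] at t4
    refine le_of_tendsto_of_tendsto (t2.const_mul (1/4)) t4 ?_
    filter_upwards [Filter.eventually_ge_atTop (0:ℝ)] with T hT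
    have a := aux_C g S hg hS h0 hpos hm T hT
    have b := htail T hT
    have c : T * S T ^ 2 ≤ T * S T := by
      have := mul_le_mul_of_nonneg_left (hSle T hT) (mul_nonneg hT (hpos T hT).le)
      nlinarith
    simp only [id]
    linarith
  -- psi facts
  have hψ0 : ∀ y, 0 ≤ y → 0 ≤ ψ y := fun y hy => (hψ y hy).1
  have hψe : ∀ y, 0 ≤ y → ψ y - y = S (ψ y) / g (ψ y) := fun y hy => by
    have h1 := hφ (ψ y) (hψ0 y hy)
    rw [(hψ y hy).2, hSF _ (hψ0 y hy), ← hgf _ (hψ0 y hy)] at h1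
    linarith
  have hψge : ∀ y, 0 ≤ y → y ≤ ψ y := fun y hy => by
    have := div_pos (hpos _ (hψ0 y hy)) (hgpos (ψ y))
    linarith [hψe y hy]
  have hψS : ∀ y, 0 ≤ y → S y * Real.exp (-1) ≤ S (ψ y) := fun y hy => by
    apply aux_A g S hS hpos hm y (ψ y) hy (hψge y hy)
    rw [hψe y hy]
    have := hpos _ (hψ0 y hy)
    have := hgpos (ψ y)
    field_simp
  have hψmono : MonotoneOn ψ (Ioi 0) := by
    intro a ha b hb hab
    have ha' : (0:ℝ) ≤ a := le_of_lt ha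
    have hb' : (0:ℝ) ≤ b := le_of_lt hb
    rw [← hφ_mono.le_iff_le (hψ a ha').1 (hψ b hb').1, (hψ a ha').2, (hψ b hb').2]
    exact hab
  have hψm : AEMeasurable ψ (volume.restrict (Ioi 0)) :=
    aemeasurable_restrict_of_monotoneOn measurableSet_Ioi hψmono
  have hSψm : AEMeasurable (fun z => S (ψ z)) (volume.restrict (Ioi 0)) :=
    hSc.measurable.comp_aemeasurable hψm
  have hgm : AEMeasurable g (volume.restrict (Ioi 0)) := hg.measurable.aemeasurable
  have hI1 : IntegrableOn (fun z => ψ z * S (ψ z) * g z) (Ioi 0) := by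
    refine Integrable.mono' (hgint.const_mul (∫ z in Ioi (0:ℝ), z * g z))
      ((hψm.mul hSψm).mul hgm).aestronglyMeasurable ?_
    refine (ae_restrict_iff' measurableSet_Ioi).2 (Filter.Eventually.of_forall fun z hz => ?_)
    have hz : 0 < z := hz
    have a := hpos _ (hψ0 z hz.le)
    have b := hψ0 z hz.le
    have c := hgpos z
    rw [Real.norm_of_nonneg (by positivity)]
    exact mul_le_mul_of_nonneg_right (hbd _ b) c.le
  have hI2 : IntegrableOn (fun z => z * S (ψ z) * g z) (Ioi 0) := by
    refine Integrable.mono' hmeang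
      ((aemeasurable_id.mul hSψm).mul hgm).aestronglyMeasurable ?_
    refine (ae_restrict_iff' measurableSet_Ioi).2 (Filter.Eventually.of_forall fun z hz => ?_)
    have hz : 0 < z := hz
    have a := hpos _ (hψ0 z hz.le)
    have b := hSle _ (hψ0 z hz.le)
    have c := hgpos z
    rw [Real.norm_of_nonneg (by positivity)]
    nlinarith [mul_nonneg (mul_pos hz c).le (sub_nonneg.2 b)]
  have e1 : ∫ z in Ioi (0:ℝ), ψ z * (1 - F (ψ z)) * f z = ∫ z in Ioi (0:ℝ), ψ z * S (ψ z) * g z :=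
    setIntegral_congr_fun measurableSet_Ioi (fun z hz => by
      have hz : 0 ≤ z := le_of_lt hz
      simp only [hgf z hz, hSF _ (hψ0 z hz)])
  have e2 : ∫ z in Ioi (0:ℝ), (ψ z - z) * (1 - F (ψ z)) * f z
      = (∫ z in Ioi (0:ℝ), ψ z * S (ψ z) * g z) - ∫ z in Ioi (0:ℝ), z * S (ψ z) * g z := by
    rw [← integral_sub hI1 hI2]
    exact setIntegral_congr_fun measurableSet_Ioi (fun z hz => by
      have hz : 0 ≤ z := le_of_lt hz
      simp only [hgf z hz, hSF _ (hψ0 z hz)]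
      ring)
  have e3 : Real.exp (-1) * (∫ z in Ioi (0:ℝ), z * S z * g z)
      ≤ ∫ z in Ioi (0:ℝ), z * S (ψ z) * g z := by
    rw [← integral_const_mul]
    refine setIntegral_mono_on (hint1.const_mul _) hI2 measurableSet_Ioi (fun z hz => ?_)
    have hz : 0 < z := hz
    have := mul_le_mul_of_nonneg_left (hψS z hz.le) (mul_pos hz (hgpos z)).le
    linarith
  have e4 : 1 / (4 * Real.exp 1) = Real.exp (-1) * (1 / 4) := by
    rw [Real.exp_neg]; field_simp
  have e5 := mul_le_mul_of_nonneg_left hV4 (Real.exp_pos (-1)).le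
  rw [e1, e2, ← hVg, e4]
  linarith
end

section
/- Let F be a monotone hazard rate probability distribution supported on the non-negative reals with density f and strictly increasing virtual valuation φ. Then the robustness of the optimal-consistency mechanism is at most 4e; that is, R^s_F + R^h_F ≤ 4e · R^s_F, where R^s_F = ∫₀^∞ φ⁻¹(z)·(1−F(φ⁻¹(z)))·f(z) dz and R^h_F = ∫₀^∞ z·F(φ⁻¹(z))·f(z) dz. -/
open MeasureTheory Real Set

theorem stmt_6
(f F : ℝ → ℝ)
    (hf_cont : ContinuousOn f (Ici 0))
    (hf_pos : ∀ z ∈ Ici (0:ℝ), 0 < f z)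
    (hF : ∀ z ∈ Ici (0:ℝ), F z = ∫ t in (0:ℝ)..z, f t)
    (hF_lt : ∀ z ∈ Ici (0:ℝ), F z < 1)
    (hprob : ∫ z in Ioi (0:ℝ), f z = 1)
(hMHR : ∀ y z : ℝ, 0 ≤ y → y ≤ z → f y / (1 - F y) ≤ f z / (1 - F z))
(φ ψ : ℝ → ℝ)
    (hφ : ∀ z ∈ Ici (0:ℝ), φ z = z - (1 - F z) / f z)
    (hφ_mono : StrictMonoOn φ (Ici 0))
    (hφ_top : Filter.Tendsto φ Filter.atTop Filter.atTop)
    (hψ : ∀ y ∈ Ici (0:ℝ), ψ y ∈ Ici (0:ℝ) ∧ φ (ψ y) = y)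
(hmean : IntegrableOn (fun z => z * f z) (Ioi 0)) :
    (∫ z in Ioi (0:ℝ), ψ z * (1 - F (ψ z)) * f z)
      + (∫ z in Ioi (0:ℝ), z * F (ψ z) * f z)
    ≤ 4 * Real.exp 1 * ∫ z in Ioi (0:ℝ), ψ z * (1 - F (ψ z)) * f z := by
  have hfint : IntegrableOn f (Ioi 0) := by
    by_contra h
    rw [integral_undef h] at hprob
    exact zero_ne_one hprob
  -- continuous extension
  obtain ⟨g, hg⟩ : ∃ g : ℝ → ℝ, g = fun z => f (max z 0) := ⟨_, rfl⟩
  have hgc : Continuous g := by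
    rw [hg]
    exact hf_cont.comp_continuous (by fun_prop) (fun x => mem_Ici.2 (le_max_right _ _))
  have hgf : ∀ z, 0 ≤ z → g z = f z := fun z hz => by simp [hg, hz]
  obtain ⟨G, hG⟩ : ∃ G : ℝ → ℝ, G = fun z => ∫ t in (0:ℝ)..z, g t := ⟨_, rfl⟩
  have hGd : ∀ z, HasDerivAt G (g z) z := fun z => by
    rw [hG]
    exact intervalIntegral.integral_hasDerivAt_right (hgc.intervalIntegrable _ _)
      (hgc.stronglyMeasurableAtFilter _ _) hgc.continuousAt
  have hGc : Continuous G := continuous_iff_continuousAt.2 fun z => (hGd z).continuousAt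
  have hGF : ∀ z, 0 ≤ z → G z = F z := fun z hz => by
    rw [hF z hz, hG]
    apply intervalIntegral.integral_congr
    intro t ht
    rw [uIcc_of_le hz] at ht
    exact hgf t ht.1
  have hS : ∀ z, 0 ≤ z → 0 < 1 - G z := fun z hz => by
    have := hF_lt z hz
    rw [hGF z hz]; linarith
  have hgp : ∀ z, 0 ≤ z → 0 < g z := fun z hz => by rw [hgf z hz]; exact hf_pos z hz
  have hG0 : G 0 = 0 := by simp [hG]
  have hGmono : ∀ a b, 0 ≤ a → a ≤ b → G a ≤ G b := by
    have : MonotoneOn G (Ici 0) := by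
      apply monotoneOn_of_deriv_nonneg (convex_Ici 0) hGc.continuousOn
      · exact fun x _ => (hGd x).differentiableAt.differentiableWithinAt
      · intro x hx
        rw [interior_Ici] at hx
        rw [(hGd x).deriv]
        exact (hgp x (le_of_lt hx)).le
    exact fun a b ha hab => this ha (ha.trans hab) hab
  have hGnn : ∀ z, 0 ≤ z → 0 ≤ G z := fun z hz => by
    rw [← hG0]; exact hGmono 0 z le_rfl hz
  have hMHR' : ∀ y z : ℝ, 0 ≤ y → y ≤ z → g y / (1 - G y) ≤ g z / (1 - G z) := by
    intro y z hy hyz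
    rw [hgf y hy, hgf z (hy.trans hyz), hGF y hy, hGF z (hy.trans hyz)]
    exact hMHR y z hy hyz
  have hGtop : Filter.Tendsto G Filter.atTop (nhds 1) := by
    have h1 := intervalIntegral_tendsto_integral_Ioi 0 hfint Filter.tendsto_id
    rw [hprob] at h1
    refine h1.congr' ?_
    filter_upwards [Filter.eventually_ge_atTop 0] with z hz
    rw [hGF z hz, hF z hz]; rfl
  -- cumulative hazard
  obtain ⟨H, hH⟩ : ∃ H : ℝ → ℝ, H = fun z => - Real.log (1 - G z) := ⟨_, rfl⟩
  have hHd : ∀ z, 0 ≤ z → HasDerivAt H (g z / (1 - G z)) z := fun z hz => by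
    rw [hH]
    have := (((hGd z).const_sub 1).log (hS z hz).ne').neg
    refine this.congr_deriv ?_
    rw [neg_div, neg_neg]
  have hH0 : H 0 = 0 := by simp [hH, hG0]
  have hHexp : ∀ z, 0 ≤ z → 1 - G z = Real.exp (-H z) := fun z hz => by
    simp [hH, Real.exp_log (hS z hz)]
  have hHnn : ∀ z, 0 ≤ z → 0 ≤ H z := fun z hz => by
    have := Real.log_nonpos (hS z hz).le (by linarith [hGnn z hz])
    simp only [hH]; linarith
  have hHmvt : ∀ a b, 0 ≤ a → a < b → ∃ c ∈ Ioo a b, H b - H a = g c / (1 - G c) * (b - a) := by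
    intro a b ha hab
    obtain ⟨c, hc, h⟩ := exists_hasDerivAt_eq_slope H (fun z => g z / (1 - G z)) hab
      (fun x hx => (hHd x (ha.trans hx.1)).continuousAt.continuousWithinAt)
      (fun x hx => hHd x (ha.trans hx.1.le))
    refine ⟨c, hc, ?_⟩
    have : b - a ≠ 0 := by linarith
    rw [h]; field_simp
  have hstar : ∀ a b, 0 ≤ a → a ≤ b → H a * b ≤ H b * a := by
    intro a b ha hab
    rcases ha.eq_or_lt with rfl | ha'
    · simp [hH0]
    rcases hab.eq_or_lt with rfl | hab'
    · exact le_rfl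
    obtain ⟨c, hc, h1⟩ := hHmvt 0 a le_rfl ha'
    obtain ⟨d, hd, h2⟩ := hHmvt a b ha hab'
    have h3 := hMHR' c d hc.1.le (hc.2.trans hd.1).le
    rw [hH0] at h1
    have h4 : H a = g c / (1 - G c) * a := by linarith
    have h5 : H b = g c / (1 - G c) * a + g d / (1 - G d) * (b - a) := by linarith
    rw [h5, h4]
    have := mul_le_mul_of_nonneg_right h3 (mul_nonneg ha (sub_nonneg.2 hab))
    nlinarith
  -- the quarter point
  obtain ⟨m, hm0, hm⟩ : ∃ m, 0 ≤ m ∧ G m = 3/4 := by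
    obtain ⟨b, hb, hb0⟩ := ((hGtop.eventually (lt_mem_nhds (show (3/4:ℝ) < 1 by norm_num))).and
      (Filter.eventually_ge_atTop 0)).exists
    obtain ⟨m, hm, h⟩ := intermediate_value_Icc hb0 hGc.continuousOn
      (show (3/4:ℝ) ∈ Icc (G 0) (G b) from ⟨by rw [hG0]; norm_num, hb.le⟩)
    exact ⟨m, hm.1, h⟩
  have hHm : 0 < H m := by
    have : Real.log (1 - G m) < 0 := Real.log_neg (hS m hm0) (by rw [hm]; norm_num)
    simp only [hH]; linarith
  have hpt : ∀ z, 0 ≤ z → m * (H z * g z * (4 * (1 - G z) - 1))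
      ≤ H m * (z * g z * (4 * (1 - G z) - 1)) := by
    intro z hz
    have hgz := hgp z hz
    rcases le_total z m with h | h
    · have h1 := hstar z m hz h
      have h2 := hGmono z m hz h
      have := mul_le_mul_of_nonneg_right h1
        (mul_nonneg hgz.le (show 0 ≤ 4 * (1 - G z) - 1 by linarith))
      nlinarith
    · have h1 := hstar m z hm0 h
      have h2 := hGmono m z hm0 h
      have := mul_le_mul_of_nonneg_right h1
        (mul_nonneg hgz.le (show 0 ≤ 1 - 4 * (1 - G z) by linarith))
      nlinarith
  have hfin : ∀ T, 0 ≤ T → 0 ≤ ∫ z in (0:ℝ)..T, z * g z * (4 * (1 - G z) - 1) := by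
    intro T hT
    have hHc : ContinuousOn H (uIcc 0 T) := fun x hx => by
      rw [uIcc_of_le hT] at hx
      exact (hHd x hx.1).continuousAt.continuousWithinAt
    have hic : IntervalIntegrable (fun z => H z * g z * (4 * (1 - G z) - 1)) volume 0 T := by
      apply ContinuousOn.intervalIntegrable
      fun_prop
    have hftc := intervalIntegral.integral_eq_sub_of_hasDerivAt
      (f := fun z => -2 * H z * (1 - G z)^2 - (1 - G z)^2 + H z * (1 - G z) + (1 - G z))
      (f' := fun z => H z * g z * (4 * (1 - G z) - 1)) (a := 0) (b := T) (by
        intro x hx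
        rw [uIcc_of_le hT] at hx
        have hs := (hGd x).const_sub 1
        have hh := hHd x hx.1
        have := ((((hh.const_mul (-2)).mul (hs.pow 2)).sub (hs.pow 2)).add (hh.mul hs)).add hs
        refine this.congr_deriv ?_
        have := (hS x hx.1).ne'
        simp only [Pi.pow_apply]
        field_simp
        ring) hic
    have hmono := intervalIntegral.integral_mono_on hT (hic.const_mul m)
      (g := fun z => H m * (z * g z * (4 * (1 - G z) - 1)))
      (Continuous.intervalIntegrable (by fun_prop) _ _) (fun z hz => hpt z hz.1)
    rw [intervalIntegral.integral_const_mul, intervalIntegral.integral_const_mul, hftc] at hmono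
    have hnn : 0 ≤ -2 * H T * (1 - G T)^2 - (1 - G T)^2 + H T * (1 - G T) + (1 - G T) := by
      have hs := hS T hT
      have hu := hHnn T hT
      have he : (1 - G T) * (1 + H T) ≤ 1 := by
        have h1 : H T + 1 ≤ Real.exp (H T) := Real.add_one_le_exp _
        have h2 : (1 - G T) * Real.exp (H T) = 1 := by
          rw [hHexp T hT, ← Real.exp_add]; simp
        refine le_trans (mul_le_mul_of_nonneg_left ?_ hs.le) h2.le
        linarith
      have h3 : (1 + 2 * H T) * (1 - G T) ≤ 1 + H T := by
        nlinarith [mul_nonneg hs.le (sq_nonneg (H T))]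
      nlinarith
    simp only [hH0, hG0] at hmono
    have : 0 ≤ H m * ∫ z in (0:ℝ)..T, z * g z * (4 * (1 - G z) - 1) := by
      refine le_trans (mul_nonneg hm0 ?_) hmono
      linarith
    exact nonneg_of_mul_nonneg_right this hHm
  have hmeang : IntegrableOn (fun z => z * g z) (Ioi 0) :=
    hmean.congr_fun (fun z hz => by simp only [hgf z (le_of_lt hz)]) measurableSet_Ioi
  have hgint : IntegrableOn g (Ioi 0) :=
    hfint.congr_fun (fun z hz => by simp only [hgf z (le_of_lt hz)]) measurableSet_Ioi
  have hint0 : IntegrableOn (fun z => z * g z * (4 * (1 - G z) - 1)) (Ioi 0) := by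
    refine Integrable.mono' (hmeang.const_mul 3) (by fun_prop) ?_
    refine (ae_restrict_iff' measurableSet_Ioi).2 (Filter.Eventually.of_forall fun z hz => ?_)
    have hz0 : 0 ≤ z := le_of_lt hz
    have h1 := hS z hz0
    have h2 := hGnn z hz0
    rw [norm_mul, Real.norm_of_nonneg (mul_nonneg hz0 (hgp z hz0).le), mul_comm 3]
    apply mul_le_mul_of_nonneg_left _ (mul_nonneg hz0 (hgp z hz0).le)
    rw [Real.norm_eq_abs, abs_le]
    constructor <;> linarith
  have hkey : 0 ≤ ∫ z in Ioi (0:ℝ), z * g z * (4 * (1 - G z) - 1) := by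
    refine ge_of_tendsto (intervalIntegral_tendsto_integral_Ioi 0 hint0 Filter.tendsto_id) ?_
    filter_upwards [Filter.eventually_ge_atTop 0] with T hT using hfin T hT
  -- facts about psi
  have hψ0 : ∀ z, 0 ≤ z → 0 ≤ ψ z := fun z hz => (hψ z hz).1
  have hψe : ∀ z, 0 ≤ z → ψ z = z + (1 - G (ψ z)) / g (ψ z) := fun z hz => by
    have h1 := (hψ z hz).2
    rw [hφ _ (hψ z hz).1] at h1
    rw [hGF _ (hψ0 z hz), hgf _ (hψ0 z hz)]
    linarith
  have hψgt : ∀ z, 0 ≤ z → z < ψ z := fun z hz => by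
    have := div_pos (hS _ (hψ0 z hz)) (hgp _ (hψ0 z hz))
    linarith [hψe z hz]
  have hψmono : MonotoneOn ψ (Ioi 0) := by
    intro a ha b hb hab
    have ha' := hψ a (mem_Ici.2 (le_of_lt ha))
    have hb' := hψ b (mem_Ici.2 (le_of_lt hb))
    rw [← hφ_mono.le_iff_le ha'.1 hb'.1, ha'.2, hb'.2]
    exact hab
  have hψmeas : AEMeasurable ψ (volume.restrict (Ioi 0)) :=
    aemeasurable_restrict_of_monotoneOn measurableSet_Ioi hψmono
  have hGψmeas : AEMeasurable (fun z => G (ψ z)) (volume.restrict (Ioi 0)) :=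
    hGc.measurable.comp_aemeasurable hψmeas
  have hψS : ∀ z, 0 ≤ z → 1 - G z ≤ Real.exp 1 * (1 - G (ψ z)) := by
    intro z hz
    have hp := hψ0 z hz
    obtain ⟨c, hc, h⟩ := hHmvt z (ψ z) hz (hψgt z hz)
    have h1 := hMHR' c (ψ z) (hz.trans hc.1.le) hc.2.le
    have h2 : H (ψ z) - H z ≤ 1 := by
      rw [h]
      refine (mul_le_mul_of_nonneg_right h1 (by linarith [hψgt z hz])).trans ?_
      have h3 : ψ z - z = (1 - G (ψ z)) / g (ψ z) := by linarith [hψe z hz]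
      rw [h3]
      have := (hS _ hp).ne'
      have := (hgp _ hp).ne'
      apply le_of_eq
      field_simp
    rw [hHexp z hz, hHexp _ hp, ← Real.exp_add]
    apply Real.exp_le_exp.2
    linarith
  -- rewrite integrals
  have e1 : ∫ z in Ioi (0:ℝ), ψ z * (1 - F (ψ z)) * f z
      = ∫ z in Ioi (0:ℝ), ψ z * (1 - G (ψ z)) * g z :=
    setIntegral_congr_fun measurableSet_Ioi fun z hz => by
      have hz0 : 0 ≤ z := le_of_lt hz
      simp only [hGF _ (hψ0 z hz0), hgf z hz0]
  have e2 : ∫ z in Ioi (0:ℝ), z * F (ψ z) * f z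
      = ∫ z in Ioi (0:ℝ), z * G (ψ z) * g z :=
    setIntegral_congr_fun measurableSet_Ioi fun z hz => by
      have hz0 : 0 ≤ z := le_of_lt hz
      simp only [hGF _ (hψ0 z hz0), hgf z hz0]
  rw [e1, e2]
  have i1 : IntegrableOn (fun z => ψ z * (1 - G (ψ z)) * g z) (Ioi 0) := by
    refine Integrable.mono' (hmeang.add (hgint.const_mul (1 / g 0))) ?_ ?_
    · exact ((hψmeas.mul (hGψmeas.const_sub 1)).mul hgc.measurable.aemeasurable).aestronglyMeasurable
    refine (ae_restrict_iff' measurableSet_Ioi).2 (Filter.Eventually.of_forall fun z hz => ?_)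
    have hz0 : 0 ≤ z := le_of_lt hz
    have hp := hψ0 z hz0
    have hs := hS _ hp
    have hgz := hgp z hz0
    rw [Real.norm_of_nonneg (by positivity)]
    have h1 := hMHR' 0 (ψ z) le_rfl hp
    have h0 := hgp 0 le_rfl
    have h2 : (1 - G (ψ z)) / g (ψ z) ≤ 1 / g 0 := by
      rw [hG0, sub_zero, div_one] at h1
      rw [← one_div_div]
      exact one_div_le_one_div_of_le h0 h1
    have h3 : ψ z * (1 - G (ψ z)) ≤ z + 1 / g 0 := by
      have : ψ z * (1 - G (ψ z)) ≤ ψ z * 1 :=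
        mul_le_mul_of_nonneg_left (by linarith [hGnn _ hp]) hp
      linarith [hψe z hz0]
    have := mul_le_mul_of_nonneg_right h3 hgz.le
    simp only [Pi.add_apply]
    linarith
  have i2 : IntegrableOn (fun z => z * G (ψ z) * g z) (Ioi 0) := by
    refine Integrable.mono' hmeang ?_ ?_
    · exact ((measurable_id.aemeasurable.mul hGψmeas).mul
        hgc.measurable.aemeasurable).aestronglyMeasurable
    refine (ae_restrict_iff' measurableSet_Ioi).2 (Filter.Eventually.of_forall fun z hz => ?_)
    have hz0 : 0 ≤ z := le_of_lt hz
    have hp := hψ0 z hz0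
    have hs := hS _ hp
    have hgn := hGnn _ hp
    have hgz := hgp z hz0
    rw [Real.norm_of_nonneg (by positivity)]
    apply mul_le_mul_of_nonneg_right _ hgz.le
    nlinarith
  have hmain : ∫ z in Ioi (0:ℝ), z * g z * (4 * (1 - G z) - 1) ≤
      ∫ z in Ioi (0:ℝ), ((4 * Real.exp 1 - 1) * (ψ z * (1 - G (ψ z)) * g z)
        - z * G (ψ z) * g z) := by
    refine setIntegral_mono_on hint0 ((i1.const_mul _).sub i2) measurableSet_Ioi fun z hz => ?_
    have hz0 : 0 ≤ z := le_of_lt hz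
    have hp := hψ0 z hz0
    have hs := hS _ hp
    have hgz := hgp z hz0
    have he : 1 ≤ Real.exp 1 := Real.one_le_exp zero_le_one
    have h1 : z * (4 * (1 - G z) - 1) ≤
        (4 * Real.exp 1 - 1) * (ψ z * (1 - G (ψ z))) - z * G (ψ z) := by
      have h2 := mul_le_mul_of_nonneg_left (hψS z hz0) hz0
      have h3 : z * (1 - G (ψ z)) ≤ ψ z * (1 - G (ψ z)) :=
        mul_le_mul_of_nonneg_right (hψgt z hz0).le hs.le
      have h4 := mul_le_mul_of_nonneg_left h3 (show 0 ≤ 4 * Real.exp 1 - 1 by linarith)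
      linarith
    have := mul_le_mul_of_nonneg_right h1 hgz.le
    linarith
  rw [integral_sub (i1.const_mul _) i2, integral_const_mul] at hmain
  linarith
end

section
/- Let F be a monotone hazard rate probability distribution supported on the non-negative reals with density f and strictly increasing virtual valuation φ. Then R^1_F ≥ A_F + (3/(4e))·V_F, where R^1_F = ∫₀^∞ (φ⁻¹(z)·(1−F(φ⁻¹(z))) + F(φ⁻¹(z))·R*_F)·f(z) dz. -/
open MeasureTheory Real Set

theorem tangent_aux (S g : ℝ → ℝ) (hd : ∀ x, HasDerivAt S (-g x) x)
    (hpos : ∀ x, 0 ≤ x → 0 < S x)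
    (hm : ∀ y z : ℝ, 0 ≤ y → y ≤ z → g y / S y ≤ g z / S z)
    (a b : ℝ) (ha : 0 ≤ a) (hab : a ≤ b) :
    S a * exp (-(g b / S b * (b - a))) ≤ S b ∧ S b ≤ S a * exp (-(g a / S a * (b - a))) := by
  rcases hab.eq_or_lt with rfl | hlt
  · simp
  have hderiv : ∀ x, 0 ≤ x → HasDerivAt (fun x => log (S x)) (-g x / S x) x := fun x hx =>
    (hd x).log (hpos x hx).ne'
  obtain ⟨c, hc, hce⟩ := exists_hasDerivAt_eq_slope (fun x => log (S x)) (fun x => -g x / S x) hlt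
    (fun x hx => (hderiv x (ha.trans hx.1)).continuousAt.continuousWithinAt)
    (fun x hx => hderiv x (ha.trans hx.1.le))
  have hSa := hpos a ha
  have hSb := hpos b (ha.trans hab)
  have hba : 0 < b - a := sub_pos.2 hlt
  have h1 := hm a c ha hc.1.le
  have h2 := hm c b (ha.trans hc.1.le) hc.2.le
  have h3 : log (S b) - log (S a) = -(g c / S c * (b - a)) := by
    rw [eq_div_iff hba.ne'] at hce
    rw [← hce]; ring
  have h4 := mul_le_mul_of_nonneg_right h1 hba.le
  have h5 := mul_le_mul_of_nonneg_right h2 hba.le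
  constructor
  · calc S a * exp (-(g b / S b * (b - a))) = exp (log (S a) + -(g b / S b * (b - a))) := by
          rw [exp_add, exp_log hSa]
      _ ≤ exp (log (S b)) := exp_le_exp.2 (by linarith)
      _ = S b := exp_log hSb
  · calc S b = exp (log (S b)) := (exp_log hSb).symm
      _ ≤ exp (log (S a) + -(g a / S a * (b - a))) := exp_le_exp.2 (by linarith)
      _ = _ := by rw [exp_add, exp_log hSa]

theorem stmt_7
(f F : ℝ → ℝ)
    (hf_cont : ContinuousOn f (Ici 0))
    (hf_pos : ∀ z ∈ Ici (0:ℝ), 0 < f z)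
    (hF : ∀ z ∈ Ici (0:ℝ), F z = ∫ t in (0:ℝ)..z, f t)
    (hF_lt : ∀ z ∈ Ici (0:ℝ), F z < 1)
    (hprob : ∫ z in Ioi (0:ℝ), f z = 1)
(hMHR : ∀ y z : ℝ, 0 ≤ y → y ≤ z → f y / (1 - F y) ≤ f z / (1 - F z))
(φ ψ : ℝ → ℝ)
    (hφ : ∀ z ∈ Ici (0:ℝ), φ z = z - (1 - F z) / f z)
    (hφ_mono : StrictMonoOn φ (Ici 0))
    (hφ_top : Filter.Tendsto φ Filter.atTop Filter.atTop)
    (hψ : ∀ y ∈ Ici (0:ℝ), ψ y ∈ Ici (0:ℝ) ∧ φ (ψ y) = y)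
(hmean : IntegrableOn (fun z => z * f z) (Ioi 0)) :
    ∫ z in Ioi (0:ℝ), (ψ z * (1 - F (ψ z)) + F (ψ z) * (ψ 0 * (1 - F (ψ 0)))) * f z
      ≥ (∫ z in Ioi (0:ℝ), (ψ z - z) * (1 - F (ψ z)) * f z)
        + (3 / (4 * Real.exp 1)) * ∫ z in Ioi (0:ℝ), z * f z := by
  -- continuous extension
  obtain ⟨g, hg⟩ : ∃ g : ℝ → ℝ, g = fun x => f (max x 0) := ⟨_, rfl⟩
  have hgc : Continuous g := by
    rw [hg]
    exact hf_cont.comp_continuous (by fun_prop) (fun x => by simp)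
  have hgf : ∀ x, 0 ≤ x → g x = f x := fun x hx => by rw [hg]; simp [max_eq_left hx]
  obtain ⟨S, hS⟩ : ∃ S : ℝ → ℝ, S = fun x => 1 - ∫ t in (0:ℝ)..x, g t := ⟨_, rfl⟩
  have hSd : ∀ x, HasDerivAt S (-g x) x := fun x => by
    rw [hS]
    exact (hgc.integral_hasStrictDerivAt 0 x).hasDerivAt.const_sub 1
  have hSF : ∀ x, 0 ≤ x → 1 - F x = S x := fun x hx => by
    rw [hS, hF x hx]
    simp only
    congr 1
    apply intervalIntegral.integral_congr
    intro t ht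
    rw [uIcc_of_le hx] at ht
    exact (hgf t ht.1).symm
  have hFS : ∀ x, 0 ≤ x → F x = 1 - S x := fun x hx => by linarith [hSF x hx]
  have hS0 : S 0 = 1 := by rw [hS]; simp
  have hSpos : ∀ x, 0 ≤ x → 0 < S x := fun x hx => by linarith [hSF x hx, hF_lt x hx]
  have hgpos : ∀ x, 0 < g x := fun x => by rw [hg]; exact hf_pos _ (by simp)
  have hSc : Continuous S := continuous_iff_continuousAt.2 fun x => (hSd x).continuousAt
  have hm : ∀ y z : ℝ, 0 ≤ y → y ≤ z → g y / S y ≤ g z / S z := fun y z hy hyz => by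
    have := hMHR y z hy hyz
    rwa [hSF y hy, hSF z (hy.trans hyz), ← hgf y hy, ← hgf z (hy.trans hyz)] at this
  have htan := tangent_aux S g hSd hSpos hm
  have hSanti : Antitone S := antitone_of_hasDerivAt_nonpos hSd (fun x => by
    have := hgpos x; simp; linarith)
  have hSle : ∀ x, 0 ≤ x → S x ≤ 1 := fun x hx => hS0 ▸ hSanti hx
  -- ψ
  have hψ0 : ∀ y, 0 ≤ y → 0 ≤ ψ y := fun y hy => (hψ y hy).1
  have hψe : ∀ y, 0 ≤ y → g (ψ y) / S (ψ y) * (ψ y - y) = 1 ∧ y < ψ y := fun y hy => by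
    have h1 := (hψ y hy).2
    rw [hφ _ (hψ y hy).1, hSF _ (hψ0 y hy), ← hgf _ (hψ0 y hy)] at h1
    have h2 := hgpos (ψ y)
    have h3 := hSpos _ (hψ0 y hy)
    have h4 : ψ y - y = S (ψ y) / g (ψ y) := by linarith
    refine ⟨?_, ?_⟩
    · rw [h4]; field_simp
    · have : 0 < S (ψ y) / g (ψ y) := by positivity
      linarith
  have hψm : MonotoneOn ψ (Ici 0) := fun a ha b hb hab => by
    by_contra hcon
    push Not at hcon
    have := hφ_mono (hψ b hb).1 (hψ a ha).1 hcon
    rw [(hψ b hb).2, (hψ a ha).2] at this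
    linarith
  obtain ⟨r, hr⟩ : ∃ r, r = ψ 0 := ⟨_, rfl⟩
  obtain ⟨hr1, hr0⟩ := hψe 0 le_rfl
  rw [← hr] at hr1 hr0
  have hhr : g r / S r = 1 / r := by
    rw [eq_div_iff hr0.ne']; simpa using hr1
  have hSr := hSpos r hr0.le
  have hexp : ∀ p, 0 ≤ p → S p ≤ S r * exp 1 * exp (-(1 / r) * p) := fun p hp => by
    rw [mul_assoc, ← exp_add]
    rcases le_total r p with h | h
    · refine (htan r p hr0.le h).2.trans (le_of_eq ?_)
      rw [hhr]; congr 2; field_simp; ring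
    · have := (htan p r hp h).1
      rw [hhr] at this
      have h2 : 1 + -(1 / r) * p = 1 / r * (r - p) := by field_simp; ring
      rw [h2]
      calc S p = S p * exp (-(1 / r * (r - p))) * exp (1 / r * (r - p)) := by
            rw [mul_assoc, ← exp_add]; simp
        _ ≤ _ := by gcongr
  have hrev : ∀ p, 0 ≤ p → p * S p ≤ r * S r := fun p hp => by
    have h1 := hexp p hp
    have h2 : p / r ≤ exp (p / r - 1) := by linarith [add_one_le_exp (p / r - 1)]
    have h3 : exp 1 * exp (-(1 / r) * p) * exp (p / r - 1) = 1 := by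
      rw [← exp_add, ← exp_add, exp_eq_one_iff]; ring
    have h4 : p ≤ r * exp (p / r - 1) := by
      rw [div_le_iff₀ hr0] at h2; linarith
    calc p * S p ≤ (r * exp (p / r - 1)) * (S r * exp 1 * exp (-(1 / r) * p)) := by
          apply mul_le_mul h4 h1 (hSpos p hp).le (by positivity)
      _ = r * S r * (exp 1 * exp (-(1 / r) * p) * exp (p / r - 1)) := by ring
      _ = _ := by rw [h3, mul_one]
  -- limits
  have hrneg : -(1 / r) < 0 := by have : 0 < 1 / r := by positivity
                                  linarith
  have hexpint : IntegrableOn (fun p => exp (-(1 / r) * p)) (Ioi 0) :=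
    integrableOn_exp_mul_Ioi hrneg 0
  have hSint : IntegrableOn S (Ioi 0) := by
    refine Integrable.mono' (hexpint.const_mul (S r * exp 1)) hSc.aestronglyMeasurable ?_
    filter_upwards [ae_restrict_mem measurableSet_Ioi] with x hx
    rw [norm_of_nonneg (hSpos x (le_of_lt hx)).le]
    exact hexp x (le_of_lt hx)
  have hfint : IntegrableOn g (Ioi 0) := by
    have h : IntegrableOn f (Ioi 0) := by
      by_contra h
      have := integral_undef h
      rw [hprob] at this; norm_num at this
    exact h.congr_fun (fun x hx => (hgf x (le_of_lt hx)).symm) measurableSet_Ioi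
  have hzgint : IntegrableOn (fun z => z * g z) (Ioi 0) :=
    hmean.congr_fun (fun x hx => by simp only [hgf x (le_of_lt hx)]) measurableSet_Ioi
  have hzS : Filter.Tendsto (fun z => z * S z) Filter.atTop (nhds 0) := by
    have h1 : Filter.Tendsto (fun z : ℝ => S r * exp 1 * (z ^ (1:ℝ) * exp (-(1 / r) * z))) Filter.atTop (nhds 0) := by
      have := (tendsto_rpow_mul_exp_neg_mul_atTop_nhds_zero 1 (1 / r) (by positivity)).const_mul (S r * exp 1)
      simpa using this
    refine squeeze_zero' ?_ ?_ h1
    · filter_upwards [Filter.eventually_ge_atTop 0] with z hz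
      exact mul_nonneg hz (hSpos z hz).le
    · filter_upwards [Filter.eventually_ge_atTop 0] with z hz
      rw [rpow_one]
      nlinarith [mul_le_mul_of_nonneg_left (hexp z hz) hz]
  have hSlim : Filter.Tendsto S Filter.atTop (nhds 0) := by
    refine squeeze_zero' ?_ ?_ hzS
    · filter_upwards [Filter.eventually_ge_atTop 0] with z hz
      exact (hSpos z hz).le
    · filter_upwards [Filter.eventually_ge_atTop 1] with z hz
      nlinarith [hSpos z (by linarith)]
  -- bounded multiples of integrable functions
  have hbdd : ∀ (u v : ℝ → ℝ) (C : ℝ), IntegrableOn v (Ioi 0) →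
      AEStronglyMeasurable u (volume.restrict (Ioi 0)) → (∀ x, 0 < x → |u x| ≤ C) →
      IntegrableOn (fun x => u x * v x) (Ioi 0) := fun u v C hv hu hb => by
    refine Integrable.bdd_mul (c := C) hv hu ?_
    filter_upwards [ae_restrict_mem measurableSet_Ioi] with x hx
    exact hb x hx
  have hSabs : ∀ x, 0 < x → |S x| ≤ 1 := fun x hx => by
    rw [abs_of_pos (hSpos x hx.le)]; exact hSle x hx.le
  have hS2int : IntegrableOn (fun x => S x * S x) (Ioi 0) :=
    hbdd S S 1 hSint hSc.aestronglyMeasurable hSabs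
  have hSzgint : IntegrableOn (fun x => S x * (x * g x)) (Ioi 0) :=
    hbdd S _ 1 hzgint hSc.aestronglyMeasurable hSabs
  have hSgint : IntegrableOn (fun x => S x * g x) (Ioi 0) :=
    hbdd S _ 1 hfint hSc.aestronglyMeasurable hSabs
  -- V = ∫ S
  have hV : ∫ z in Ioi (0:ℝ), z * g z = ∫ z in Ioi (0:ℝ), S z := by
    have := integral_Ioi_of_hasDerivAt_of_tendsto' (a := 0) (f := fun z => z * S z)
      (f' := fun z => S z - z * g z) (m := 0)
      (fun x _ => by
        have := (hasDerivAt_id x).mul (hSd x)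
        exact this.congr_deriv (by simp; ring)) (hSint.sub hzgint) hzS
    rw [integral_sub hSint hzgint] at this
    simp at this; linarith
  have hW : ∫ z in Ioi (0:ℝ), S z * (z * g z) = (1/2) * ∫ z in Ioi (0:ℝ), S z * S z := by
    have := integral_Ioi_of_hasDerivAt_of_tendsto' (a := 0) (f := fun z => (z * S z) * S z)
      (f' := fun z => S z * S z - 2 * (S z * (z * g z))) (m := 0)
      (fun x _ => by
        have := ((hasDerivAt_id x).mul (hSd x)).mul (hSd x)
        exact this.congr_deriv (by simp; ring)) (hS2int.sub (hSzgint.const_mul 2)) (by simpa using hzS.mul hSlim)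
    rw [integral_sub hS2int (hSzgint.const_mul 2), integral_const_mul] at this
    simp at this; linarith
  have hprob' : ∫ z in Ioi (0:ℝ), g z = 1 := by
    rw [← hprob]
    exact setIntegral_congr_fun measurableSet_Ioi (fun x hx => hgf x (le_of_lt hx))
  have hH : ∫ z in Ioi (0:ℝ), S z * g z = 1 / 2 := by
    have := integral_Ioi_of_hasDerivAt_of_tendsto' (a := 0) (f := fun z => S z * S z)
      (f' := fun z => (-2) * (S z * g z)) (m := 0)
      (fun x _ => by
        have := (hSd x).mul (hSd x)
        exact this.congr_deriv (by ring)) (hSgint.const_mul (-2)) (by simpa using hSlim.mul hSlim)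
    rw [integral_const_mul, hS0] at this
    linarith
  have hS2 : (1/2) * ∫ z in Ioi (0:ℝ), S z ≤ ∫ z in Ioi (0:ℝ), S z * S z := by
    have h1 := integral_comp_mul_left_Ioi S 0 (b := 2) (by norm_num)
    have h2 : IntegrableOn (fun x => S (2 * x)) (Ioi 0) := by
      rw [integrableOn_Ioi_comp_mul_left_iff S 0 (by norm_num : (0:ℝ) < 2)]
      simpa using hSint
    simp only [mul_zero, smul_eq_mul] at h1
    rw [one_div, ← h1]
    refine setIntegral_mono_on h2 hS2int measurableSet_Ioi (fun x hx => ?_)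
    have hx0 : 0 ≤ x := le_of_lt hx
    have h3 := (htan x (2 * x) hx0 (by linarith)).2
    have h4 := (htan 0 x le_rfl hx0).1
    rw [hS0, one_mul, sub_zero] at h4
    rw [show 2 * x - x = x by ring] at h3
    exact h3.trans (mul_le_mul_of_nonneg_left h4 (hSpos x hx0).le)
  have hR : ∫ z in Ioi (0:ℝ), S z ≤ exp 1 * (r * S r) := by
    have h1 : ∫ z in Ioi (0:ℝ), S z ≤ ∫ z in Ioi (0:ℝ), S r * exp 1 * exp (-(1 / r) * z) :=
      setIntegral_mono_on hSint (hexpint.const_mul _) measurableSet_Ioi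
        (fun x hx => hexp x (le_of_lt hx))
    rw [integral_const_mul, integral_exp_mul_Ioi hrneg] at h1
    refine h1.trans (le_of_eq ?_)
    simp; ring
  -- main
  have hψmeas : AEMeasurable ψ (volume.restrict (Ioi 0)) :=
    aemeasurable_restrict_of_monotoneOn measurableSet_Ioi (hψm.mono Ioi_subset_Ici_self)
  have hSψmeas : AEMeasurable (fun z => S (ψ z)) (volume.restrict (Ioi 0)) :=
    hSc.measurable.comp_aemeasurable hψmeas
  obtain ⟨R, hRdef⟩ : ∃ R, R = r * S r := ⟨_, rfl⟩
  have hRpos : 0 < R := by rw [hRdef]; positivity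
  have hI1 : IntegrableOn (fun z => (ψ z * S (ψ z) + (1 - S (ψ z)) * R) * g z) (Ioi 0) := by
    refine hbdd _ g (2 * R) hfint ?_ ?_
    · exact ((hψmeas.mul hSψmeas).add
        ((aemeasurable_const.sub hSψmeas).mul aemeasurable_const)).aestronglyMeasurable
    · intro x hx
      have h0 := hψ0 x hx.le
      have h1 := hrev _ h0
      have h2 := hSpos _ h0
      have h3 := hSle _ h0
      rw [← hRdef] at h1
      have h4 : 0 ≤ ψ x * S (ψ x) := by positivity
      rw [abs_le]
      constructor <;> nlinarith
  have hI2 : IntegrableOn (fun z => ((ψ z - z) * S (ψ z)) * g z) (Ioi 0) := by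
    refine hbdd _ g R hfint ?_ ?_
    · exact ((hψmeas.sub aemeasurable_id).mul hSψmeas).aestronglyMeasurable
    · intro x hx
      have h0 := hψ0 x hx.le
      have h1 := hrev _ h0
      have h2 := hSpos _ h0
      have h3 := (hψe x hx.le).2
      rw [← hRdef] at h1
      rw [abs_of_nonneg (mul_nonneg (by linarith) h2.le)]
      nlinarith
  have hE1 : ∫ z in Ioi (0:ℝ), (ψ z * (1 - F (ψ z)) + F (ψ z) * (ψ 0 * (1 - F (ψ 0)))) * f z
      = ∫ z in Ioi (0:ℝ), (ψ z * S (ψ z) + (1 - S (ψ z)) * R) * g z := by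
    refine setIntegral_congr_fun measurableSet_Ioi (fun x hx => ?_)
    have hx0 : 0 ≤ x := le_of_lt hx
    rw [hFS _ (hψ0 x hx0), hFS _ (hψ0 0 le_rfl), hgf x hx0, hRdef, hr]
    ring
  have hE2 : ∫ z in Ioi (0:ℝ), (ψ z - z) * (1 - F (ψ z)) * f z
      = ∫ z in Ioi (0:ℝ), ((ψ z - z) * S (ψ z)) * g z := by
    refine setIntegral_congr_fun measurableSet_Ioi (fun x hx => ?_)
    have hx0 : 0 ≤ x := le_of_lt hx
    rw [hFS _ (hψ0 x hx0), hgf x hx0]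
    ring
  have hE3 : ∫ z in Ioi (0:ℝ), z * f z = ∫ z in Ioi (0:ℝ), z * g z :=
    setIntegral_congr_fun measurableSet_Ioi (fun x hx => by simp only [hgf x (le_of_lt hx)])
  rw [hE1, hE2, hE3, hV]
  have hI4 : IntegrableOn (fun z => g z - S z * g z) (Ioi 0) := hfint.sub hSgint
  have hI3 : IntegrableOn (fun z => exp (-1) * (S z * (z * g z)) + R * (g z - S z * g z)) (Ioi 0) :=
    (hSzgint.const_mul _).add (hI4.const_mul _)
  have hmain : ∫ z in Ioi (0:ℝ), (exp (-1) * (S z * (z * g z)) + R * (g z - S z * g z))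
      ≤ ∫ z in Ioi (0:ℝ), ((ψ z * S (ψ z) + (1 - S (ψ z)) * R) * g z
        - ((ψ z - z) * S (ψ z)) * g z) := by
    refine setIntegral_mono_on hI3 (hI1.sub hI2) measurableSet_Ioi (fun x hx => ?_)
    have hx0 : 0 ≤ x := le_of_lt hx
    obtain ⟨h1, h2⟩ := hψe x hx0
    have h3 := (htan x (ψ x) hx0 h2.le).1
    rw [h1] at h3
    have h4 := hSanti h2.le
    have h5 := hgpos x
    have h6 : 0 ≤ x * (S (ψ x) - S x * exp (-1)) + R * (S x - S (ψ x)) := by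
      have := mul_nonneg hx0 (sub_nonneg.2 h3)
      have := mul_nonneg hRpos.le (sub_nonneg.2 h4)
      linarith
    have h7 := mul_nonneg h6 h5.le
    linarith
  rw [integral_sub hI1 hI2, integral_add (hSzgint.const_mul _) (hI4.const_mul _),
    integral_const_mul, integral_const_mul, integral_sub hfint hSgint, hprob', hH, hW] at hmain
  have he : (0:ℝ) < exp 1 := exp_pos 1
  rw [← hRdef] at hR
  have h8 : 3 / (4 * exp 1) * ∫ z in Ioi (0:ℝ), S z
      ≤ exp (-1) * (1 / 2 * ∫ z in Ioi (0:ℝ), S z * S z) + R * (1 - 1 / 2) := by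
    rw [exp_neg]
    have h9 : (exp 1)⁻¹ * ∫ z in Ioi (0:ℝ), S z ≤ R := by
      rw [inv_mul_le_iff₀ he]; exact hR
    have h10 := mul_le_mul_of_nonneg_left hS2 (inv_pos.2 he).le
    have h11 : 3 / (4 * exp 1) = 3 / 4 * (exp 1)⁻¹ := by field_simp
    rw [h11]
    nlinarith
  linarith
end

section
/- Let F be a monotone hazard rate probability distribution supported on the non-negative reals with density f and strictly increasing virtual valuation φ, and let R*_F = φ⁻¹(0)·(1−F(φ⁻¹(0))). Then for every z ≥ 0, φ⁻¹(z)·(1−F(φ⁻¹(z))) + F(φ⁻¹(z))·R*_F ≥ (1/e)·(φ⁻¹(z)−z)·(1−F(φ⁻¹(z))) + (1/e)·z·(1−F(z)) + R*_F·(1 − 1/e + F(z)/e). -/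
open MeasureTheory Real Set

theorem stmt_8
(f F : ℝ → ℝ)
    (hf_cont : ContinuousOn f (Ici 0))
    (hf_pos : ∀ z ∈ Ici (0:ℝ), 0 < f z)
    (hF : ∀ z ∈ Ici (0:ℝ), F z = ∫ t in (0:ℝ)..z, f t)
    (hF_lt : ∀ z ∈ Ici (0:ℝ), F z < 1)
    (hprob : ∫ z in Ioi (0:ℝ), f z = 1)
(hMHR : ∀ y z : ℝ, 0 ≤ y → y ≤ z → f y / (1 - F y) ≤ f z / (1 - F z))
(φ ψ : ℝ → ℝ)
    (hφ : ∀ z ∈ Ici (0:ℝ), φ z = z - (1 - F z) / f z)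
    (hφ_mono : StrictMonoOn φ (Ici 0))
    (hφ_top : Filter.Tendsto φ Filter.atTop Filter.atTop)
    (hψ : ∀ y ∈ Ici (0:ℝ), ψ y ∈ Ici (0:ℝ) ∧ φ (ψ y) = y) :
    ∀ z : ℝ, 0 ≤ z →
      ψ z * (1 - F (ψ z)) + F (ψ z) * (ψ 0 * (1 - F (ψ 0)))
      ≥ (1 / Real.exp 1) * (ψ z - z) * (1 - F (ψ z))
        + (1 / Real.exp 1) * z * (1 - F z)
        + (ψ 0 * (1 - F (ψ 0))) * (1 - 1 / Real.exp 1 + F z / Real.exp 1) := by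
  intro z hz
  obtain ⟨hp0, hpz⟩ := hψ z hz
  obtain ⟨hq0, hqz⟩ := hψ 0 (mem_Ici.2 le_rfl)
  generalize ψ z = p at *
  generalize ψ 0 = q at *
  rw [mem_Ici] at hp0 hq0
  have hqp : q ≤ p := by
    by_contra hlt
    have := hφ_mono (mem_Ici.2 hp0) (mem_Ici.2 hq0) (not_le.1 hlt)
    linarith
  have hgc : Continuous (fun t => f (max t 0)) :=
    hf_cont.comp_continuous (by fun_prop) (fun t => mem_Ici.2 (le_max_right _ _))
  have hG : ∀ x, 0 ≤ x → F x = ∫ t in (0:ℝ)..x, f (max t 0) := by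
    intro x hx
    rw [hF x hx]
    apply intervalIntegral.integral_congr
    intro t ht
    rw [uIcc_of_le hx] at ht
    simp [max_eq_left ht.1]
  have hD : ∀ x, HasDerivAt (fun y => ∫ t in (0:ℝ)..y, f (max t 0)) (f (max x 0)) x :=
    fun x => hgc.integral_hasStrictDerivAt 0 x |>.hasDerivAt
  have hF0 : 0 ≤ F q := by
    rw [hG q hq0]
    exact intervalIntegral.integral_nonneg hq0
      (fun t _ => (hf_pos _ (mem_Ici.2 (le_max_right _ _))).le)
  have hFmono : Monotone (fun y => ∫ t in (0:ℝ)..y, f (max t 0)) := by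
    apply monotone_of_deriv_nonneg (fun x => (hD x).differentiableAt)
    intro x
    rw [(hD x).deriv]
    exact (hf_pos _ (mem_Ici.2 (le_max_right _ _))).le
  have hfp := hf_pos p hp0
  have hSp : 0 < 1 - F p := by linarith [hF_lt p hp0]
  have hpz' : p - z = (1 - F p) / f p := by
    rw [hφ p hp0] at hpz; linarith
  have hpzpos : 0 < p - z := by rw [hpz']; positivity
  have hFz : F z ≤ F p := by
    rw [hG z hz, hG p hp0]; exact hFmono (by linarith)
  have hRq : q * (1 - F q) ≤ q := by nlinarith
  have he : 1 ≤ Real.exp 1 := Real.one_le_exp (by norm_num)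
  have hkey : 1 - F z ≤ Real.exp 1 * (1 - F p) := by
    set c := f p / (1 - F p) with hc
    have hd : ∀ x, HasDerivAt
        (fun y => (1 - ∫ t in (0:ℝ)..y, f (max t 0)) * Real.exp (c * y))
        ((-f (max x 0)) * Real.exp (c * x)
          + (1 - ∫ t in (0:ℝ)..x, f (max t 0)) * (Real.exp (c * x) * (c * 1))) x := by
      intro x
      exact ((hD x).const_sub 1).mul (((hasDerivAt_id x).const_mul c).exp)
    have hm : MonotoneOn
        (fun y => (1 - ∫ t in (0:ℝ)..y, f (max t 0)) * Real.exp (c * y)) (Icc 0 p) := by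
      apply monotoneOn_of_deriv_nonneg (convex_Icc 0 p)
      · exact fun x _ => (hd x).continuousAt.continuousWithinAt
      · exact fun x _ => (hd x).differentiableAt.differentiableWithinAt
      · intro x hx
        rw [interior_Icc] at hx
        rw [(hd x).deriv, ← hG x hx.1.le, max_eq_left hx.1.le]
        have h1 := hMHR x p hx.1.le hx.2.le
        have hSx : 0 < 1 - F x := by linarith [hF_lt x hx.1.le]
        rw [← hc, div_le_iff₀ hSx] at h1
        have := mul_nonneg (Real.exp_pos (c * x)).le (sub_nonneg.2 h1)
        linarith
    have h2 := hm ⟨hz, by linarith⟩ ⟨hp0, le_rfl⟩ (by linarith : z ≤ p)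
    simp only [← hG z hz, ← hG p hp0] at h2
    have h3 : c * p = 1 + c * z := by
      have : c * (p - z) = 1 := by
        rw [hpz', hc]; field_simp
      linarith
    rw [h3, Real.exp_add, ← mul_assoc] at h2
    have := le_of_mul_le_mul_right h2 (Real.exp_pos _)
    linarith
  generalize q * (1 - F q) = R at *
  have hepos := Real.exp_pos 1
  generalize Real.exp 1 = e at *
  have hmain : (p - z) * (1 - F p) + (z - R) * (1 - F z) ≤ e * ((p - R) * (1 - F p)) := by
    rcases le_total R z with h | h
    · have h1 := mul_le_mul_of_nonneg_left hkey (sub_nonneg.2 h)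
      have h2 := mul_nonneg (sub_nonneg.2 he) (mul_pos hpzpos hSp).le
      nlinarith
    · have h1 := mul_nonneg (sub_nonneg.2 h) (sub_nonneg.2 hFz)
      have h2 := mul_nonneg (sub_nonneg.2 he)
        (mul_nonneg (by linarith : 0 ≤ p - R) hSp.le)
      nlinarith
  have h4 : ((p - z) * (1 - F p) + (z - R) * (1 - F z)) / e ≤ (p - R) * (1 - F p) := by
    rw [div_le_iff₀ hepos]; linarith
  have h5 : (1 / e) * (p - z) * (1 - F p) + (1 / e) * z * (1 - F z)
        + R * (1 - 1 / e + F z / e)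
      = ((p - z) * (1 - F p) + (z - R) * (1 - F z)) / e + R := by
    field_simp; ring
  rw [h5]
  linarith
end

section
/- Let F be a monotone hazard rate probability distribution supported on the non-negative reals with density f and strictly increasing virtual valuation φ. Then R^1_F ≥ (1/e)·A_F + (5/(4e) − 1/(2e²))·V_F, where R^1_F = ∫₀^∞ (φ⁻¹(z)·(1−F(φ⁻¹(z))) + F(φ⁻¹(z))·R*_F)·f(z) dz. -/
open MeasureTheory Real Set

theorem stmt_9
(f F : ℝ → ℝ)
    (hf_cont : ContinuousOn f (Ici 0))
    (hf_pos : ∀ z ∈ Ici (0:ℝ), 0 < f z)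
    (hF : ∀ z ∈ Ici (0:ℝ), F z = ∫ t in (0:ℝ)..z, f t)
    (hF_lt : ∀ z ∈ Ici (0:ℝ), F z < 1)
    (hprob : ∫ z in Ioi (0:ℝ), f z = 1)
(hMHR : ∀ y z : ℝ, 0 ≤ y → y ≤ z → f y / (1 - F y) ≤ f z / (1 - F z))
(φ ψ : ℝ → ℝ)
    (hφ : ∀ z ∈ Ici (0:ℝ), φ z = z - (1 - F z) / f z)
    (hφ_mono : StrictMonoOn φ (Ici 0))
    (hφ_top : Filter.Tendsto φ Filter.atTop Filter.atTop)
    (hψ : ∀ y ∈ Ici (0:ℝ), ψ y ∈ Ici (0:ℝ) ∧ φ (ψ y) = y)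
(hmean : IntegrableOn (fun z => z * f z) (Ioi 0)) :
    ∫ z in Ioi (0:ℝ), (ψ z * (1 - F (ψ z)) + F (ψ z) * (ψ 0 * (1 - F (ψ 0)))) * f z
      ≥ (1 / Real.exp 1) * (∫ z in Ioi (0:ℝ), (ψ z - z) * (1 - F (ψ z)) * f z)
        + (5 / (4 * Real.exp 1) - 1 / (2 * Real.exp 1 ^ 2)) * ∫ z in Ioi (0:ℝ), z * f z := by
  -- basic objects
  obtain ⟨G, hG⟩ : ∃ G : ℝ → ℝ, ∀ z, G z = 1 - F z := ⟨_, fun _ => rfl⟩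
  have hFG : ∀ z, F z = 1 - G z := fun z => by rw [hG]; ring
  have hGpos : ∀ z, 0 ≤ z → 0 < G z := fun z hz => by
    rw [hG]; linarith [hF_lt z hz]
  have hfi : IntegrableOn f (Ioi 0) := by
    by_contra h
    rw [integral_undef h] at hprob
    norm_num at hprob
  set g : ℝ → ℝ := fun z => f (max z 0) with hg
  have hgc : Continuous g := by
    have : Continuous (fun z : ℝ => max z 0) := by fun_prop
    exact hf_cont.comp_continuous this (fun z => mem_Ici.2 (le_max_right _ _))
  have hGg : ∀ z, 0 ≤ z → G z = 1 - ∫ t in (0:ℝ)..z, g t := by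
    intro z hz
    rw [hG, hF z hz]
    congr 1
    apply intervalIntegral.integral_congr
    intro t ht
    rw [uIcc_of_le hz] at ht
    simp [hg, max_eq_left ht.1]
  have hPd : ∀ z, HasDerivAt (fun z => 1 - ∫ t in (0:ℝ)..z, g t) (-g z) z := by
    intro z
    have := (hgc.integral_hasStrictDerivAt 0 z).hasDerivAt
    simpa using this.const_sub 1
  have hGd : ∀ z, 0 < z → HasDerivAt G (-f z) z := by
    intro z hz
    have h1 := hPd z
    have h2 : g z = f z := by simp [hg, max_eq_left hz.le]
    rw [h2] at h1
    apply h1.congr_of_eventuallyEq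
    filter_upwards [lt_mem_nhds hz] with y hy
    exact hGg y hy.le
  have hGc : ContinuousOn G (Ici 0) := by
    have : Continuous (fun z => 1 - ∫ t in (0:ℝ)..z, g t) :=
      continuous_iff_continuousAt.2 fun z => (hPd z).continuousAt
    exact this.continuousOn.congr (fun z hz => hGg z hz)
  have hG0 : G 0 = 1 := by rw [hGg 0 le_rfl]; simp
  have hGanti : AntitoneOn G (Ici 0) := by
    apply antitoneOn_of_deriv_nonpos (convex_Ici 0) hGc
    · intro z hz
      rw [interior_Ici] at hz
      exact (hGd z hz).differentiableAt.differentiableWithinAt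
    · intro z hz
      rw [interior_Ici] at hz
      rw [(hGd z hz).deriv]
      linarith [hf_pos z (mem_Ici.2 (le_of_lt hz))]
  have hG1 : ∀ z, 0 ≤ z → G z ≤ 1 := fun z hz => by
    rw [← hG0]; exact hGanti (mem_Ici.2 le_rfl) hz hz
  have hM : ∀ y z : ℝ, 0 ≤ y → y ≤ z → f y / G y ≤ f z / G z := by
    intro y z hy hz; rw [hG, hG]; exact hMHR y z hy hz
  have hmvt : ∀ a b : ℝ, 0 ≤ a → a < b → ∃ c, a < c ∧ c < b ∧
      Real.log (G b) - Real.log (G a) = -(f c / G c) * (b - a) := by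
    intro a b ha hab
    obtain ⟨c, hc, h⟩ := exists_hasDerivAt_eq_slope (fun z => Real.log (G z))
      (fun z => -f z / G z) hab
      (ContinuousOn.log (hGc.mono (fun z hz => ha.trans hz.1))
        (fun z hz => (hGpos z (ha.trans hz.1)).ne'))
      (fun z hz => (hGd z (lt_of_le_of_lt ha hz.1)).log (hGpos z (ha.trans hz.1.le)).ne')
    refine ⟨c, hc.1, hc.2, ?_⟩
    have : b - a ≠ 0 := by linarith
    rw [eq_div_iff this] at h
    rw [← h]; ring
  have htan : ∀ a b : ℝ, 0 ≤ a → 0 ≤ b →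
      Real.log (G b) ≤ Real.log (G a) - (f a / G a) * (b - a) := by
    intro a b ha hb
    rcases lt_trichotomy a b with h | h | h
    · obtain ⟨c, h1, h2, h3⟩ := hmvt a b ha h
      nlinarith [hM a c ha h1.le]
    · subst h; simp
    · obtain ⟨c, h1, h2, h3⟩ := hmvt b a hb h
      nlinarith [hM c a (hb.trans h1.le) h2.le]
  have htanE : ∀ a b : ℝ, 0 ≤ a → 0 ≤ b →
      G b ≤ G a * Real.exp (- (f a / G a) * (b - a)) := by
    intro a b ha hb
    rw [← Real.log_le_log_iff (hGpos b hb) (by have := hGpos a ha; positivity),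
      Real.log_mul (hGpos a ha).ne' (Real.exp_pos _).ne', Real.log_exp]
    linarith [htan a b ha hb]
  -- properties of ψ
  have hψ0 : ∀ z, 0 ≤ z → 0 ≤ ψ z := fun z hz => (hψ z hz).1
  have hψe : ∀ z, 0 ≤ z → ψ z - z = G (ψ z) / f (ψ z) := by
    intro z hz
    have h1 := (hψ z hz).2
    rw [hφ _ (hψ z hz).1, ← hG] at h1
    linarith
  have hψz : ∀ z, 0 ≤ z → z < ψ z := by
    intro z hz
    have h1 := hψe z hz
    have := hGpos _ (hψ0 z hz)
    have := hf_pos _ (hψ z hz).1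
    have : 0 < G (ψ z) / f (ψ z) := by positivity
    linarith
  have hψm : MonotoneOn ψ (Ici 0) := by
    intro x hx y hy hxy
    rw [← hφ_mono.le_iff_le (hψ x hx).1 (hψ y hy).1, (hψ x hx).2, (hψ y hy).2]
    exact hxy
  have hψh : ∀ z, 0 ≤ z → f (ψ z) / G (ψ z) * (ψ z - z) = 1 := by
    intro z hz
    rw [hψe z hz]
    have := (hGpos _ (hψ0 z hz)).ne'
    have := (hf_pos _ (hψ z hz).1).ne'
    field_simp
  have hGψ : ∀ z, 0 ≤ z → G z ≤ G (ψ z) * Real.exp 1 := by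
    intro z hz
    have h := htanE (ψ z) z (hψ0 z hz) hz
    have e : - (f (ψ z) / G (ψ z)) * (z - ψ z) = 1 := by rw [← hψh z hz]; ring
    rwa [e] at h
  obtain ⟨p, hp⟩ : ∃ p, p = ψ 0 := ⟨_, rfl⟩
  have hp0 : 0 < p := hp ▸ hψz 0 le_rfl
  have hGp : 0 < G p := hGpos p hp0.le
  have hexpb : ∀ z, 0 ≤ z → G z ≤ (G p * Real.exp 1) * Real.exp (-(1/p) * z) := by
    intro z hz
    have h := htanE p z hp0.le hz
    have e : f p / G p = 1 / p := by
      have := hψh 0 le_rfl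
      rw [← hp, sub_zero] at this
      rw [eq_div_iff hp0.ne', this]
    have e2 : -(1/p) * (z - p) = 1 + -(1/p) * z := by field_simp; ring
    rw [e, e2, Real.exp_add] at h
    linarith
  have hneg : -(1/p) < 0 := by have : 0 < 1/p := by positivity
                               linarith
  have hEi : IntegrableOn (fun z => (G p * Real.exp 1) * Real.exp (-(1/p) * z)) (Ioi 0) :=
    (integrableOn_exp_mul_Ioi hneg 0).const_mul _
  have hGm : AEStronglyMeasurable G (volume.restrict (Ioi 0)) :=
    (hGc.mono Ioi_subset_Ici_self).aestronglyMeasurable measurableSet_Ioi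
  have hGi : IntegrableOn G (Ioi 0) := by
    refine Integrable.mono' hEi hGm ?_
    filter_upwards [ae_restrict_mem measurableSet_Ioi] with z hz
    rw [Real.norm_of_nonneg (hGpos z (le_of_lt hz)).le]
    exact hexpb z (le_of_lt hz)
  have hGint : ∫ z in Ioi (0:ℝ), G z ≤ Real.exp 1 * (p * G p) := by
    calc ∫ z in Ioi (0:ℝ), G z ≤ ∫ z in Ioi (0:ℝ), (G p * Real.exp 1) * Real.exp (-(1/p) * z) :=
          setIntegral_mono_on hGi hEi measurableSet_Ioi (fun z hz => hexpb z (le_of_lt hz))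
      _ = Real.exp 1 * (p * G p) := by
          rw [integral_const_mul, integral_exp_mul_Ioi hneg]
          have := hp0.ne'
          simp
          ring
  have hzG : Filter.Tendsto (fun z => z * G z) Filter.atTop (nhds 0) := by
    have h1 := (tendsto_rpow_mul_exp_neg_mul_atTop_nhds_zero 1 (1/p) (by positivity)).const_mul
      (G p * Real.exp 1)
    rw [mul_zero] at h1
    refine tendsto_of_tendsto_of_tendsto_of_le_of_le' tendsto_const_nhds h1 ?_ ?_
    · filter_upwards [Filter.eventually_ge_atTop 0] with z hz
      have := hGpos z hz
      positivity
    · filter_upwards [Filter.eventually_ge_atTop 0] with z hz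
      rw [Real.rpow_one]
      have := mul_le_mul_of_nonneg_left (hexpb z hz) hz
      linarith
  have hGt : Filter.Tendsto G Filter.atTop (nhds 0) := by
    refine tendsto_of_tendsto_of_tendsto_of_le_of_le' tendsto_const_nhds hzG ?_ ?_
    · filter_upwards [Filter.eventually_ge_atTop 0] with z hz
      exact (hGpos z hz).le
    · filter_upwards [Filter.eventually_ge_atTop 1] with z hz
      nlinarith [hGpos z (by linarith)]
  -- bounded times integrable
  have hbd : ∀ k : ℝ → ℝ, IntegrableOn k (Ioi 0) → IntegrableOn (fun z => G z * k z) (Ioi 0) := by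
    intro k hk
    refine Integrable.bdd_mul (c := 1) hk hGm ?_
    filter_upwards [ae_restrict_mem measurableSet_Ioi] with z hz
    rw [Real.norm_of_nonneg (hGpos z (le_of_lt hz)).le]
    exact hG1 z (le_of_lt hz)
  have hGf := hbd f hfi
  have hGG := hbd G hGi
  have hzGf := hbd _ hmean
  have hcw : ContinuousWithinAt G (Ici 0) 0 := hGc 0 (mem_Ici.2 le_rfl)
  have I1 : ∫ z in Ioi (0:ℝ), G z * f z = 1/2 := by
    have h := integral_Ioi_of_hasDerivAt_of_tendsto (a := 0) (f := fun z => -(G z * G z)/2)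
      (f' := fun z => G z * f z) (m := 0) ((hcw.mul hcw).neg.div_const 2)
      (fun z hz => by
        have := (((hGd z hz).mul (hGd z hz)).neg).div_const 2
        refine this.congr_deriv ?_
        ring) hGf (by simpa using ((hGt.mul hGt).neg).div_const 2)
    rw [h, hG0]; norm_num
  have I2 : ∫ z in Ioi (0:ℝ), z * f z = ∫ z in Ioi (0:ℝ), G z := by
    have h := integral_Ioi_of_hasDerivAt_of_tendsto (a := 0) (f := fun z => z * G z)
      (f' := fun z => G z - z * f z) (m := 0) (continuousWithinAt_id.mul hcw)
      (fun z hz => by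
        have := (hasDerivAt_id z).mul (hGd z hz)
        refine this.congr_deriv ?_
        simp; ring) (hGi.sub hmean) hzG
    rw [integral_sub hGi hmean] at h
    simp at h
    linarith
  have I3 : 2 * ∫ z in Ioi (0:ℝ), G z * (z * f z) = ∫ z in Ioi (0:ℝ), G z * G z := by
    have h := integral_Ioi_of_hasDerivAt_of_tendsto (a := 0) (f := fun z => z * G z * G z)
      (f' := fun z => G z * G z - 2 * (G z * (z * f z))) (m := 0)
      ((continuousWithinAt_id.mul hcw).mul hcw)
      (fun z hz => by
        have := ((hasDerivAt_id z).mul (hGd z hz)).mul (hGd z hz)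
        refine this.congr_deriv ?_
        simp; ring) (hGG.sub (hzGf.const_mul 2)) (by simpa using hzG.mul hGt)
    rw [integral_sub hGG (hzGf.const_mul 2), integral_const_mul] at h
    simp at h
    linarith
  obtain ⟨m, hm0, hm⟩ : ∃ m, 0 ≤ m ∧ G m = 1/2 := by
    obtain ⟨b, hb, hb0⟩ := ((hGt.eventually (gt_mem_nhds (show (0:ℝ) < 1/2 by norm_num))).and
      (Filter.eventually_ge_atTop 0)).exists
    obtain ⟨m, hm, h⟩ := intermediate_value_Icc' hb0 (hGc.mono Icc_subset_Ici_self)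
      (show (1/2:ℝ) ∈ Icc (G b) (G 0) from ⟨hb.le, by rw [hG0]; norm_num⟩)
    exact ⟨m, hm.1, h⟩
  have I4 : (∫ z in Ioi (0:ℝ), G z) / 2 ≤ ∫ z in Ioi (0:ℝ), G z * G z := by
    have hfm := hf_pos m hm0
    have h : ∫ z in Ioi (0:ℝ), (1 / f m) * (G z * f z - 1/2 * f z)
        ≤ ∫ z in Ioi (0:ℝ), 2 * (G z * G z - 1/2 * G z) := by
      refine setIntegral_mono_on ((hGf.sub (hfi.const_mul _)).const_mul _)
        ((hGG.sub (hGi.const_mul _)).const_mul _) measurableSet_Ioi ?_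
      intro z hz
      have hz' : 0 ≤ z := le_of_lt hz
      have hgz := hGpos z hz'
      have key : (G z - 1/2) * f z ≤ (G z - 1/2) * (2 * f m * G z) := by
        rcases le_total z m with h | h
        · have h1 := hM z m hz' h
          have h2 := hGanti hz' hm0 h
          rw [hm, div_le_iff₀ hgz] at h1
          rw [hm] at h2
          apply mul_le_mul_of_nonneg_left _ (by linarith)
          linarith
        · have h1 := hM m z hm0 h
          have h2 := hGanti hm0 hz' h
          rw [hm, le_div_iff₀ hgz] at h1
          rw [hm] at h2
          apply mul_le_mul_of_nonpos_left _ (by linarith)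
          linarith
      rw [one_div, inv_mul_le_iff₀ hfm]
      linarith
    rw [integral_const_mul, integral_const_mul, integral_sub hGf (hfi.const_mul _),
      integral_sub hGG (hGi.const_mul _), integral_const_mul, integral_const_mul, I1, hprob] at h
    norm_num at h
    linarith
  -- integrability of the two integrands
  have hψmeas : AEStronglyMeasurable ψ (volume.restrict (Ioi 0)) :=
    (aemeasurable_restrict_of_monotoneOn measurableSet_Ioi
      (hψm.mono Ioi_subset_Ici_self)).aestronglyMeasurable
  have hGψanti : AntitoneOn (fun z => G (ψ z)) (Ioi 0) := by
    intro x hx y hy hxy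
    exact hGanti (hψ0 x (le_of_lt hx)) (hψ0 y (le_of_lt hy))
      (hψm (mem_Ici.2 (le_of_lt hx)) (mem_Ici.2 (le_of_lt hy)) hxy)
  have hGψmeas : AEStronglyMeasurable (fun z => G (ψ z)) (volume.restrict (Ioi 0)) :=
    (aemeasurable_restrict_of_antitoneOn measurableSet_Ioi hGψanti).aestronglyMeasurable
  have hbd2 : ∀ k : ℝ → ℝ, IntegrableOn k (Ioi 0) →
      IntegrableOn (fun z => G (ψ z) * k z) (Ioi 0) := by
    intro k hk
    refine Integrable.bdd_mul (c := 1) hk hGψmeas ?_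
    filter_upwards [ae_restrict_mem measurableSet_Ioi] with z hz
    have := hψ0 z (le_of_lt hz)
    rw [Real.norm_of_nonneg (hGpos _ this).le]
    exact hG1 _ this
  have hf0 := hf_pos 0 (mem_Ici.2 le_rfl)
  have hψle : ∀ z, 0 ≤ z → ψ z - z ≤ 1 / f 0 := by
    intro z hz
    have h1 := hM 0 (ψ z) le_rfl (hψ0 z hz)
    rw [hG0, div_one, le_div_iff₀ (hGpos _ (hψ0 z hz))] at h1
    rw [hψe z hz, div_le_div_iff₀ (hf_pos _ (hψ0 z hz)) hf0]
    linarith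
  have hψf : IntegrableOn (fun z => (ψ z - z) * f z) (Ioi 0) := by
    refine Integrable.bdd_mul (c := 1 / f 0) hfi
      (hψmeas.sub measurable_id.aestronglyMeasurable) ?_
    filter_upwards [ae_restrict_mem measurableSet_Ioi] with z hz
    rw [Real.norm_of_nonneg (by linarith [hψz z (le_of_lt hz)])]
    exact hψle z (le_of_lt hz)
  have hA := hbd2 _ hψf
  have hB := hbd2 _ hmean
  have hC := hbd2 _ hfi
  simp only [hFG, sub_sub_cancel, ← hp]
  obtain ⟨r, hr⟩ : ∃ r, r = p * G p := ⟨_, rfl⟩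
  rw [← hr] at hGint ⊢
  have hr0 : 0 < r := by rw [hr]; positivity
  have hrp : r ≤ p := by rw [hr]; nlinarith [hG1 p hp0.le]
  have hAi : IntegrableOn (fun z => (ψ z - z) * G (ψ z) * f z) (Ioi 0) :=
    hA.congr (Filter.Eventually.of_forall fun z => by simp only; ring)
  have hLi : IntegrableOn (fun z => (ψ z * G (ψ z) + (1 - G (ψ z)) * r) * f z) (Ioi 0) :=
    (((hA.add hB).add (hfi.const_mul r)).sub (hC.const_mul r)).congr
      (Filter.Eventually.of_forall fun z => by simp only [Pi.add_apply, Pi.sub_apply]; ring)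
  have he : 1 < Real.exp 1 := by linarith [Real.add_one_le_exp 1]
  obtain ⟨c, hc⟩ : ∃ c, c = 1 / Real.exp 1 := ⟨_, rfl⟩
  have hc0 : 0 < c := by rw [hc]; positivity
  have hc1 : c < 1 := by rw [hc, div_lt_one (by linarith)]; exact he
  have hce : c * Real.exp 1 = 1 := by rw [hc]; field_simp
  have hcoef : 5 / (4 * Real.exp 1) - 1 / (2 * Real.exp 1 ^ 2) = 5/4 * c - c^2/2 := by
    rw [hc]; field_simp
  rw [hcoef, ← hc]
  have hi2 := hAi.const_mul c
  have hi3 := hzGf.const_mul c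
  have hi4 := hGf.const_mul (c * r)
  have hi5 := hfi.const_mul r
  have hmain : ∫ z in Ioi (0:ℝ), (((c * ((ψ z - z) * G (ψ z) * f z) + c * (G z * (z * f z)))
      - c * r * (G z * f z)) + r * f z)
      ≤ ∫ z in Ioi (0:ℝ), (ψ z * G (ψ z) + (1 - G (ψ z)) * r) * f z := by
    refine setIntegral_mono_on (((hi2.add hi3).sub hi4).add hi5) hLi measurableSet_Ioi ?_
    intro z hz
    have hz' : 0 ≤ z := le_of_lt hz
    have hfz := hf_pos z hz'
    have a1 := hψz z hz'
    have a2 := hGpos _ (hψ0 z hz')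
    have a3 : c * G z ≤ G (ψ z) := by
      have := mul_le_mul_of_nonneg_left (hGψ z hz') hc0.le
      calc c * G z ≤ _ := this
        _ = G (ψ z) * (c * Real.exp 1) := by ring
        _ = _ := by rw [hce, mul_one]
    have a4 : G (ψ z) ≤ G z := hGanti hz' (hψ0 z hz') a1.le
    have a5 : r ≤ ψ z := hrp.trans (hp ▸ hψm (mem_Ici.2 le_rfl) hz' hz')
    have key : c * ((ψ z - z) * G (ψ z)) + c * ((z - r) * G z) ≤ (ψ z - r) * G (ψ z) := by
      rcases le_total r z with h | h
      · have b1 : (z - r) * (c * G z) ≤ (z - r) * G (ψ z) :=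
          mul_le_mul_of_nonneg_left a3 (by linarith)
        have b2 : 0 ≤ (1 - c) * ((ψ z - z) * G (ψ z)) :=
          mul_nonneg (by linarith) (mul_nonneg (by linarith) a2.le)
        linarith
      · have b1 : 0 ≤ c * ((r - z) * (G z - G (ψ z))) :=
          mul_nonneg hc0.le (mul_nonneg (by linarith) (by linarith))
        have b2 : 0 ≤ (1 - c) * ((ψ z - r) * G (ψ z)) :=
          mul_nonneg (by linarith) (mul_nonneg (by linarith) a2.le)
        linarith
    have := mul_le_mul_of_nonneg_right key hfz.le
    linarith
  have hi23 : Integrable (fun z => c * ((ψ z - z) * G (ψ z) * f z) + c * (G z * (z * f z)))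
      (volume.restrict (Ioi 0)) := hi2.add hi3
  have hi234 : Integrable (fun z => c * ((ψ z - z) * G (ψ z) * f z) + c * (G z * (z * f z))
      - c * r * (G z * f z)) (volume.restrict (Ioi 0)) := hi23.sub hi4
  rw [integral_add hi234 hi5, integral_sub hi23 hi4,
    integral_add hi2 hi3, integral_const_mul, integral_const_mul, integral_const_mul,
    integral_const_mul, I1, hprob] at hmain
  rw [I2]
  have hV : c * (∫ z in Ioi (0:ℝ), G z) ≤ r := by
    have := mul_le_mul_of_nonneg_left hGint hc0.le
    rw [← mul_assoc, hce, one_mul] at this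
    exact this
  have hX : (∫ z in Ioi (0:ℝ), G z) / 4 ≤ ∫ z in Ioi (0:ℝ), G z * (z * f z) := by linarith
  have hX2 := mul_le_mul_of_nonneg_left hX hc0.le
  have hV2 := mul_le_mul_of_nonneg_left hV (show 0 ≤ 1 - c/2 by linarith)
  nlinarith [hmain, hX2, hV2]
end

section
/- Let F be a monotone hazard rate probability distribution supported on the non-negative reals with density f and strictly increasing virtual valuation φ. Then A_F + V_F ≤ ((4e+2)/5)·R^1_F, where R^1_F = ∫₀^∞ (φ⁻¹(z)·(1−F(φ⁻¹(z))) + F(φ⁻¹(z))·R*_F)·f(z) dz. In particular, the robustness of the optimal prediction-ignoring mechanism is at most (4e+2)/5 ≈ 2.575. -/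
open MeasureTheory Real Set

/-- tangent bound for the survival function -/
lemma aux_tangent (g S : ℝ → ℝ) (hS : ∀ z, HasDerivAt S (-g z) z)
    (hSpos : ∀ z, 0 ≤ z → 0 < S z)
    (hM : ∀ y z : ℝ, 0 ≤ y → y ≤ z → g y / S y ≤ g z / S z)
    (w z : ℝ) (hw : 0 ≤ w) (hz : 0 ≤ z) :
    S z ≤ S w * exp ((w - z) * (g w / S w)) := by
  set k := g w / S w with hk
  have hd : ∀ x, HasDerivAt (fun x => S x * exp (x * k)) (exp (x * k) * (k * S x - g x)) x := by
    intro x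
    have h1 : HasDerivAt (fun x : ℝ => exp (x * k)) (exp (x * k) * (1 * k)) x :=
      ((hasDerivAt_id x).mul_const k).exp
    refine ((hS x).mul h1).congr_deriv ?_
    ring
  have hc : Continuous (fun x => S x * exp (x * k)) :=
    continuous_iff_continuousAt.2 fun x => (hd x).continuousAt
  have key : S z * exp (z * k) ≤ S w * exp (w * k) := by
    rcases le_total z w with h | h
    · have hm : MonotoneOn (fun x => S x * exp (x * k)) (Icc 0 w) := by
        apply monotoneOn_of_deriv_nonneg (convex_Icc 0 w) hc.continuousOn
        · exact fun x _ => (hd x).differentiableAt.differentiableWithinAt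
        · intro x hx
          rw [interior_Icc] at hx
          rw [(hd x).deriv]
          have := hM x w hx.1.le hx.2.le
          rw [div_le_iff₀ (hSpos x hx.1.le)] at this
          exact mul_nonneg (exp_pos _).le (by linarith)
      exact hm ⟨hz, h⟩ ⟨hw, le_rfl⟩ h
    · have hm : AntitoneOn (fun x => S x * exp (x * k)) (Ici w) := by
        apply antitoneOn_of_deriv_nonpos (convex_Ici w) hc.continuousOn
        · exact fun x _ => (hd x).differentiableAt.differentiableWithinAt
        · intro x hx
          rw [interior_Ici] at hx
          have hx' : w < x := hx
          rw [(hd x).deriv]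
          have := hM w x hw hx'.le
          rw [le_div_iff₀ (hSpos x (hw.trans hx'.le))] at this
          exact mul_nonpos_of_nonneg_of_nonpos (exp_pos _).le (by linarith)
      exact hm (mem_Ici.2 le_rfl) h h
  have e : (w - z) * k = w * k - z * k := by ring
  rw [e, exp_sub, ← mul_div_assoc, le_div_iff₀ (exp_pos _)]
  exact key

lemma aux_mean (g S : ℝ → ℝ) (hg : Continuous g) (hS : ∀ z, HasDerivAt S (-g z) z)
    (hSpos : ∀ z, 0 ≤ z → 0 < S z) (hS1 : ∀ z, 0 ≤ z → S z ≤ 1) (hS0 : S 0 = 1)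
    (r : ℝ) (hr : 0 < r)
    (hT : ∀ z, 0 ≤ z → S z ≤ S r * exp ((r - z) * (1 / r)))
    (hmean : IntegrableOn (fun z => z * g z) (Ioi 0)) :
    ∫ z in Ioi (0:ℝ), z * g z ≤ r * (2 + log (S r)) := by
  set q := S r with hq
  have hq0 : 0 < q := hSpos r hr.le
  have hlog : 0 ≤ 1 + log q := by
    have h := hT 0 le_rfl
    rw [hS0] at h
    have h2 := log_le_log one_pos h
    rw [log_mul hq0.ne' (exp_pos _).ne', log_exp, log_one] at h2
    have : (r - 0) * (1 / r) = 1 := by field_simp; ring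
    linarith
  set s := r * (1 + log q) with hs
  have hs0 : 0 ≤ s := mul_nonneg hr.le hlog
  have hzg : Continuous (fun z : ℝ => z * g z) := by fun_prop
  have hK : ∀ x, HasDerivAt (fun M => (∫ z in (0:ℝ)..M, z * g z) + M * S M) (S x) x := by
    intro x
    have h1 := intervalIntegral.integral_hasDerivAt_right (hzg.intervalIntegrable 0 x)
      (hzg.stronglyMeasurableAtFilter _ _) hzg.continuousAt
    refine (h1.add ((hasDerivAt_id x).mul (hS x))).congr_deriv ?_
    simp
  set K := fun M => (∫ z in (0:ℝ)..M, z * g z) + M * S M with hKdef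
  have hK0 : K 0 = 0 := by simp [hKdef]
  have a1 : K s ≤ s := by
    have hd : ∀ x, HasDerivAt (fun x => K x - x) (S x - 1) x := fun x =>
      (hK x).sub (hasDerivAt_id x)
    have hm : AntitoneOn (fun x => K x - x) (Ici 0) := by
      apply antitoneOn_of_deriv_nonpos (convex_Ici 0)
      · exact fun x _ => (hd x).continuousAt.continuousWithinAt
      · exact fun x _ => (hd x).differentiableAt.differentiableWithinAt
      · intro x hx
        rw [interior_Ici] at hx
        rw [(hd x).deriv]
        have := hS1 x (le_of_lt hx)
        linarith
    have := hm (mem_Ici.2 le_rfl) hs0 hs0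
    simp only [hK0] at this
    linarith
  have a2 : ∀ M, s ≤ M → K M ≤ s + r := by
    intro M hMs
    have hd : ∀ x, HasDerivAt (fun x => K x + r * q * exp ((r - x) * (1 / r)))
        (S x - q * exp ((r - x) * (1 / r))) x := by
      intro x
      have h1 : HasDerivAt (fun x : ℝ => exp ((r - x) * (1 / r)))
          (exp ((r - x) * (1 / r)) * (-1 * (1 / r))) x :=
        (((hasDerivAt_id x).const_sub r).mul_const (1 / r)).exp
      refine ((hK x).add (h1.const_mul (r * q))).congr_deriv ?_
      field_simp
      ring
    have hm : AntitoneOn (fun x => K x + r * q * exp ((r - x) * (1 / r))) (Ici 0) := by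
      apply antitoneOn_of_deriv_nonpos (convex_Ici 0)
      · exact fun x _ => (hd x).continuousAt.continuousWithinAt
      · exact fun x _ => (hd x).differentiableAt.differentiableWithinAt
      · intro x hx
        rw [interior_Ici] at hx
        rw [(hd x).deriv]
        have := hT x (le_of_lt hx)
        linarith
    have h := hm hs0 (mem_Ici.2 (hs0.trans hMs)) hMs
    have e1 : (r - s) * (1 / r) = - log q := by
      rw [hs]; field_simp; ring
    simp only [e1, exp_neg, exp_log hq0] at h
    have e2 : r * q * q⁻¹ = r := by field_simp
    rw [e2] at h
    have : 0 < r * q * exp ((r - M) * (1 / r)) := by positivity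
    linarith
  have hlim := intervalIntegral_tendsto_integral_Ioi (0:ℝ) hmean Filter.tendsto_id
  have hb : s + r = r * (2 + log q) := by rw [hs]; ring
  rw [← hb]
  refine le_of_tendsto hlim ?_
  filter_upwards [Filter.eventually_ge_atTop s] with M hM
  have h := a2 M hM
  have := mul_nonneg (hs0.trans hM) (hSpos M (hs0.trans hM)).le
  simp only [hKdef] at h
  simp only [id]
  linarith

lemma aux_num (q : ℝ) (hq : 0 < q) :
    2 + log q ≤ ((4 * exp 1 + 2) / 5) * q
      + ((4 * exp 1 + 2) / 5 - 1 - ((4 * exp 1 + 2) / 5) * q) / (2 * exp 1) := by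
  have e1 := exp_one_gt_d9
  have e2 := exp_one_lt_d9
  set e := exp 1 with he
  have he0 : 0 < e := exp_pos 1
  set t := (4 * e ^ 2 - 1) / (5 * e) with ht
  have ht2 : 2.1 ≤ t := by
    rw [ht, le_div_iff₀ (by positivity)]; nlinarith
  have ht0 : 0 < t := by linarith
  have h1 : log (q * t) ≤ q * t - 1 := log_le_sub_one_of_pos (by positivity)
  rw [log_mul hq.ne' ht0.ne'] at h1
  have h2 : log 2.1 ≤ log t := log_le_log (by norm_num) ht2
  have h3 : (0.74:ℝ) ≤ log 2.1 := by
    have : (2.1:ℝ) = 2 * 1.05 := by norm_num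
    rw [this, log_mul (by norm_num) (by norm_num)]
    have := log_two_gt_d9
    have := one_sub_inv_le_log_of_pos (show (0:ℝ) < 1.05 by norm_num)
    norm_num at this ⊢
    linarith
  have h4 : (0.28:ℝ) ≤ ((4 * e + 2) / 5 - 1) / (2 * e) := by
    rw [le_div_iff₀ (by positivity)]; linarith
  have h5 : ((4 * e + 2) / 5) * q + ((4 * e + 2) / 5 - 1 - ((4 * e + 2) / 5) * q) / (2 * e)
      = q * t + ((4 * e + 2) / 5 - 1) / (2 * e) := by
    rw [ht]; field_simp; ring
  rw [h5]
  linarith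

lemma aux_num2 (q : ℝ) (hq : 0 < q) :
    2 + log q ≤ ((4 * exp 1 + 2) / 5) * q
      + ((4 * exp 1 + 2) / 5 - 1 - ((4 * exp 1 + 2) / 5) * q) / 2 := by
  have e1 := exp_one_gt_d9
  set c := (4 * exp 1 + 2) / 5 with hc
  have hc1 : 2.57 ≤ c := by rw [hc]; linarith
  have h1 : log (q * (c / 2)) ≤ q * (c / 2) - 1 := log_le_sub_one_of_pos (by positivity)
  rw [log_mul hq.ne' (by positivity)] at h1
  have h2 : log 1.285 ≤ log (c / 2) := log_le_log (by norm_num) (by linarith)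
  have h3 := one_sub_inv_le_log_of_pos (show (0:ℝ) < 1.285 by norm_num)
  norm_num at h3 h2
  linarith

lemma aux_half (g S : ℝ → ℝ) (hS : ∀ z, HasDerivAt S (-g z) z) (hS0 : S 0 = 1)
    (hlim : Filter.Tendsto S Filter.atTop (nhds 0))
    (hint : IntegrableOn (fun z => S z * g z) (Ioi 0)) :
    ∫ z in Ioi (0:ℝ), S z * g z = 1 / 2 := by
  have hd : ∀ x, HasDerivAt (fun x => - (S x) ^ 2 / 2) (S x * g x) x := by
    intro x
    refine ((((hS x).pow 2).neg).div_const 2).congr_deriv ?_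
    simp; ring
  have := integral_Ioi_of_hasDerivAt_of_tendsto (a := (0:ℝ)) (m := 0)
    (hd 0).continuousAt.continuousWithinAt (fun x _ => hd x) hint
    (by simpa using ((hlim.pow 2).neg).div_const 2)
  rw [this, hS0]; norm_num

lemma aux_core (g S ψ : ℝ → ℝ) (hg : Continuous g) (hgpos : ∀ z, 0 ≤ z → 0 < g z)
    (hS : ∀ z, HasDerivAt S (-g z) z)
    (hSpos : ∀ z, 0 ≤ z → 0 < S z) (hS0 : S 0 = 1)
    (hlim : Filter.Tendsto S Filter.atTop (nhds 0))
    (hM : ∀ y z : ℝ, 0 ≤ y → y ≤ z → g y / S y ≤ g z / S z)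
    (hψ0 : ∀ z, 0 ≤ z → 0 ≤ ψ z) (hψ : ∀ z, 0 ≤ z → ψ z - S (ψ z) / g (ψ z) = z)
    (hψm : MonotoneOn ψ (Ici 0))
    (hgi : IntegrableOn g (Ioi 0)) (hg1 : ∫ z in Ioi (0:ℝ), g z = 1)
    (hmean : IntegrableOn (fun z => z * g z) (Ioi 0)) :
    (∫ z in Ioi (0:ℝ), (ψ z - z) * S (ψ z) * g z) + (∫ z in Ioi (0:ℝ), z * g z)
      ≤ ((4 * exp 1 + 2) / 5) *
          ∫ z in Ioi (0:ℝ), (ψ z * S (ψ z) + (1 - S (ψ z)) * (ψ 0 * S (ψ 0))) * g z := by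
  have hSanti : AntitoneOn S (Ici 0) := by
    apply antitoneOn_of_deriv_nonpos (convex_Ici 0)
    · exact fun x _ => (hS x).continuousAt.continuousWithinAt
    · exact fun x _ => (hS x).differentiableAt.differentiableWithinAt
    · intro x hx
      rw [interior_Ici] at hx
      rw [(hS x).deriv]
      have := hgpos x (le_of_lt hx)
      linarith
  have hScont : Continuous S := continuous_iff_continuousAt.2 fun x => (hS x).continuousAt
  have hS1 : ∀ z, 0 ≤ z → S z ≤ 1 := fun z hz => hS0 ▸ hSanti (mem_Ici.2 le_rfl) hz hz
  have hψge : ∀ z, 0 ≤ z → z ≤ ψ z := by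
    intro z hz
    have := hψ z hz
    have := div_pos (hSpos _ (hψ0 z hz)) (hgpos _ (hψ0 z hz))
    linarith
  set r := ψ 0 with hr
  have hr0 : r = S r / g r := by have := hψ 0 le_rfl; linarith
  have hrnn : 0 ≤ r := hψ0 0 le_rfl
  have hrpos : 0 < r := by rw [hr0]; exact div_pos (hSpos _ hrnn) (hgpos _ hrnn)
  have hk : g r / S r = 1 / r := by rw [eq_div_iff hrpos.ne']; nth_rw 3 [hr0]
                                    have := hSpos r hrnn; have := hgpos r hrnn; field_simp
  have hψr : ∀ z, 0 ≤ z → r ≤ ψ z := fun z hz => hψm (mem_Ici.2 le_rfl) hz hz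
  have hψle : ∀ z, 0 ≤ z → ψ z ≤ z + r := by
    intro z hz
    have h1 := hψ z hz
    have h2 := hM r (ψ z) hrnn (hψr z hz)
    have p1 := hSpos r hrnn
    have p2 := hgpos r hrnn
    have p3 := hSpos _ (hψ0 z hz)
    have p4 := hgpos _ (hψ0 z hz)
    have h3 : S (ψ z) / g (ψ z) ≤ S r / g r := by
      rw [div_le_div_iff₀ p1 p3] at h2
      rw [div_le_div_iff₀ p4 p2]; linarith
    linarith
  set q := S r with hq
  have hq0 : 0 < q := hSpos r hrnn
  set c := (4 * exp 1 + 2) / 5 with hc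
  have hc1 : 1 < c := by have := exp_one_gt_d9; rw [hc]; linarith
  have hV := aux_mean g S hg hS hSpos hS1 hS0 r hrpos
    (fun z hz => by have := aux_tangent g S hS hSpos hM r z hrnn hz; rwa [hk] at this) hmean
  -- measurability
  have mψ : AEMeasurable ψ (volume.restrict (Ioi 0)) :=
    aemeasurable_restrict_of_monotoneOn measurableSet_Ioi (hψm.mono Ioi_subset_Ici_self)
  have mG : AEMeasurable (fun z => S (ψ z)) (volume.restrict (Ioi 0)) :=
    hScont.measurable.comp_aemeasurable mψ
  have mg : AEMeasurable g (volume.restrict (Ioi 0)) := hg.measurable.aemeasurable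
  have mid : AEMeasurable (fun z : ℝ => z) (volume.restrict (Ioi 0)) := measurable_id.aemeasurable
  have iSg : IntegrableOn (fun z => S z * g z) (Ioi 0) := by
    refine Integrable.mono' hgi (by fun_prop) ?_
    refine (ae_restrict_iff' measurableSet_Ioi).2 (Filter.Eventually.of_forall fun z hz => ?_)
    have hz' : 0 ≤ z := le_of_lt hz
    rw [norm_of_nonneg (mul_nonneg (hSpos z hz').le (hgpos z hz').le)]
    exact mul_le_of_le_one_left (hgpos z hz').le (hS1 z hz')
  have iGg : IntegrableOn (fun z => S (ψ z) * g z) (Ioi 0) := by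
    refine Integrable.mono' hgi (mG.mul mg).aestronglyMeasurable ?_
    refine (ae_restrict_iff' measurableSet_Ioi).2 (Filter.Eventually.of_forall fun z hz => ?_)
    have hz' : 0 ≤ z := le_of_lt hz
    rw [norm_of_nonneg (mul_nonneg (hSpos _ (hψ0 z hz')).le (hgpos z hz').le)]
    exact mul_le_of_le_one_left (hgpos z hz').le (hS1 _ (hψ0 z hz'))
  have iψ : IntegrableOn (fun z => ψ z * S (ψ z) * g z) (Ioi 0) := by
    refine Integrable.mono' (hmean.add (hgi.const_mul r))
      ((mψ.mul mG).mul mg).aestronglyMeasurable ?_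
    refine (ae_restrict_iff' measurableSet_Ioi).2 (Filter.Eventually.of_forall fun z hz => ?_)
    have hz' : 0 ≤ z := le_of_lt hz
    have p1 := hψ0 z hz'
    have p2 := hSpos _ p1
    have p3 := hgpos z hz'
    rw [norm_of_nonneg (by positivity)]
    simp only [Pi.add_apply]
    rw [← add_mul]
    refine mul_le_mul_of_nonneg_right ?_ p3.le
    exact (mul_le_of_le_one_right p1 (hS1 _ p1)).trans (hψle z hz')
  have iz : IntegrableOn (fun z => z * S (ψ z) * g z) (Ioi 0) := by
    refine Integrable.mono' hmean ((mid.mul mG).mul mg).aestronglyMeasurable ?_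
    refine (ae_restrict_iff' measurableSet_Ioi).2 (Filter.Eventually.of_forall fun z hz => ?_)
    have hz' : 0 ≤ z := le_of_lt hz
    have p1 := hψ0 z hz'
    have p2 := hSpos _ p1
    have p3 := hgpos z hz'
    rw [norm_of_nonneg (by positivity)]
    refine mul_le_mul_of_nonneg_right ?_ p3.le
    exact mul_le_of_le_one_right hz' (hS1 _ p1)
  have hhalf := aux_half g S hS hS0 hlim iSg
  -- lower bound with G
  have hA : ∫ z in Ioi (0:ℝ), (ψ z - z) * S (ψ z) * g z
      = (∫ z in Ioi (0:ℝ), ψ z * S (ψ z) * g z) - ∫ z in Ioi (0:ℝ), z * S (ψ z) * g z := by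
    rw [← integral_sub iψ iz]
    congr 1; ext z; ring
  have hR : ∫ z in Ioi (0:ℝ), (ψ z * S (ψ z) + (1 - S (ψ z)) * (r * q)) * g z
      = (∫ z in Ioi (0:ℝ), ψ z * S (ψ z) * g z) + (r * q) * (1 - ∫ z in Ioi (0:ℝ), S (ψ z) * g z) := by
    have i2 : IntegrableOn (fun z => (r * q) * (g z - S (ψ z) * g z)) (Ioi 0) :=
      (hgi.sub iGg).const_mul _
    have h1 : (r * q) * (1 - ∫ z in Ioi (0:ℝ), S (ψ z) * g z)
        = ∫ z in Ioi (0:ℝ), (r * q) * (g z - S (ψ z) * g z) := by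
      rw [integral_const_mul, integral_sub hgi iGg, hg1]
    rw [h1, ← integral_add iψ i2]
    congr 1; ext z; ring
  have hB1 : r * ∫ z in Ioi (0:ℝ), S (ψ z) * g z ≤ ∫ z in Ioi (0:ℝ), ψ z * S (ψ z) * g z := by
    rw [← integral_const_mul]
    refine setIntegral_mono_on (iGg.const_mul r) iψ measurableSet_Ioi fun z hz => ?_
    have hz' : 0 ≤ z := le_of_lt hz
    have := mul_le_mul_of_nonneg_right (hψr z hz')
      (mul_nonneg (hSpos _ (hψ0 z hz')).le (hgpos z hz').le)
    linarith
  have hB2 : 0 ≤ ∫ z in Ioi (0:ℝ), z * S (ψ z) * g z :=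
    setIntegral_nonneg measurableSet_Ioi fun z hz =>
      mul_nonneg (mul_nonneg (le_of_lt hz) (hSpos _ (hψ0 z (le_of_lt hz))).le)
        (hgpos z (le_of_lt hz)).le
  have hG1 : ∫ z in Ioi (0:ℝ), S (ψ z) * g z ≤ 1 / 2 := by
    rw [← hhalf]
    refine setIntegral_mono_on iGg iSg measurableSet_Ioi fun z hz => ?_
    have hz' : 0 ≤ z := le_of_lt hz
    exact mul_le_mul_of_nonneg_right (hSanti hz' (hψ0 z hz') (hψge z hz')) (hgpos z hz').le
  have hG2 : 1 / (2 * exp 1) ≤ ∫ z in Ioi (0:ℝ), S (ψ z) * g z := by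
    have : 1 / 2 ≤ exp 1 * ∫ z in Ioi (0:ℝ), S (ψ z) * g z := by
      rw [← hhalf, ← integral_const_mul]
      refine setIntegral_mono_on iSg (iGg.const_mul _) measurableSet_Ioi fun z hz => ?_
      have hz' : 0 ≤ z := le_of_lt hz
      have p1 := hψ0 z hz'
      have p2 := hSpos _ p1
      have p3 := hgpos _ p1
      have h1 := aux_tangent g S hS hSpos hM (ψ z) z p1 hz'
      have e1 : (ψ z - z) * (g (ψ z) / S (ψ z)) = 1 := by
        have : ψ z - z = S (ψ z) / g (ψ z) := by have := hψ z hz'; linarith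
        rw [this]; field_simp
      rw [e1] at h1
      have := mul_le_mul_of_nonneg_right h1 (hgpos z hz').le
      linarith
    have he := exp_pos 1
    rw [div_le_iff₀ (by positivity)]
    linarith
  rw [hA, hR]
  set P := ∫ z in Ioi (0:ℝ), ψ z * S (ψ z) * g z
  set Z := ∫ z in Ioi (0:ℝ), z * S (ψ z) * g z
  set G := ∫ z in Ioi (0:ℝ), S (ψ z) * g z
  have main : 2 + log q ≤ c * q + (c - 1 - c * q) * G := by
    rcases le_total 0 (c - 1 - c * q) with h | h
    · have h1 := mul_le_mul_of_nonneg_left hG2 h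
      have h2 := aux_num q hq0
      rw [← hc] at h2
      have h3 : (c - 1 - c * q) * (1 / (2 * exp 1)) = (c - 1 - c * q) / (2 * exp 1) := by ring
      linarith
    · have h1 := mul_le_mul_of_nonpos_left hG1 h
      have h2 := aux_num2 q hq0
      rw [← hc] at h2
      linarith
  have main' := mul_le_mul_of_nonneg_left main hrnn
  have hP := mul_le_mul_of_nonneg_left hB1 (sub_nonneg.2 hc1.le)
  linarith

theorem stmt_10
(f F : ℝ → ℝ)
    (hf_cont : ContinuousOn f (Ici 0))
    (hf_pos : ∀ z ∈ Ici (0:ℝ), 0 < f z)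
    (hF : ∀ z ∈ Ici (0:ℝ), F z = ∫ t in (0:ℝ)..z, f t)
    (hF_lt : ∀ z ∈ Ici (0:ℝ), F z < 1)
    (hprob : ∫ z in Ioi (0:ℝ), f z = 1)
(hMHR : ∀ y z : ℝ, 0 ≤ y → y ≤ z → f y / (1 - F y) ≤ f z / (1 - F z))
(φ ψ : ℝ → ℝ)
    (hφ : ∀ z ∈ Ici (0:ℝ), φ z = z - (1 - F z) / f z)
    (hφ_mono : StrictMonoOn φ (Ici 0))
    (hφ_top : Filter.Tendsto φ Filter.atTop Filter.atTop)
    (hψ : ∀ y ∈ Ici (0:ℝ), ψ y ∈ Ici (0:ℝ) ∧ φ (ψ y) = y)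
(hmean : IntegrableOn (fun z => z * f z) (Ioi 0)) :
    (∫ z in Ioi (0:ℝ), (ψ z - z) * (1 - F (ψ z)) * f z) + (∫ z in Ioi (0:ℝ), z * f z)
      ≤ ((4 * Real.exp 1 + 2) / 5) *
          ∫ z in Ioi (0:ℝ), (ψ z * (1 - F (ψ z)) + F (ψ z) * (ψ 0 * (1 - F (ψ 0)))) * f z := by
  set g : ℝ → ℝ := fun z => f (max z 0) with hgdef
  have hgf : ∀ z, 0 ≤ z → g z = f z := fun z hz => by simp [hgdef, max_eq_left hz]
  have hg : Continuous g :=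
    hf_cont.comp_continuous (by fun_prop) (fun z => mem_Ici.2 (le_max_right _ _))
  set S : ℝ → ℝ := fun z => 1 - ∫ t in (0:ℝ)..z, g t with hSdef
  have hSF : ∀ z, 0 ≤ z → S z = 1 - F z := by
    intro z hz
    rw [hF z hz, hSdef]
    simp only
    congr 1
    apply intervalIntegral.integral_congr
    intro t ht
    rw [uIcc_of_le hz] at ht
    exact hgf t ht.1
  have hS : ∀ z, HasDerivAt S (-g z) z := fun z =>
    (intervalIntegral.integral_hasDerivAt_right (hg.intervalIntegrable 0 z)
      (hg.stronglyMeasurableAtFilter _ _) hg.continuousAt).const_sub 1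
  have hfi : IntegrableOn f (Ioi 0) := by
    by_contra h
    rw [integral_undef h] at hprob
    exact zero_ne_one hprob
  have hEq : ∀ k : ℝ → ℝ → ℝ, EqOn (fun z => k z (f z)) (fun z => k z (g z)) (Ioi 0) :=
    fun k z hz => by simp only [hgf z (le_of_lt hz)]
  have hgi : IntegrableOn g (Ioi 0) :=
    hfi.congr_fun (hEq fun _ y => y) measurableSet_Ioi
  have hg1 : ∫ z in Ioi (0:ℝ), g z = 1 := by
    rw [← hprob]
    exact (setIntegral_congr_fun measurableSet_Ioi (hEq fun _ y => y)).symm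
  have hlim : Filter.Tendsto S Filter.atTop (nhds 0) := by
    have h := (intervalIntegral_tendsto_integral_Ioi (0:ℝ) hgi Filter.tendsto_id).const_sub 1
    rw [hg1, sub_self] at h
    exact h
  have hψm : MonotoneOn ψ (Ici 0) := by
    intro x hx y hy hxy
    by_contra! h
    have := hφ_mono (hψ y hy).1 (hψ x hx).1 h
    rw [(hψ x hx).2, (hψ y hy).2] at this
    linarith
  have hψ0 : ∀ z, 0 ≤ z → 0 ≤ ψ z := fun z hz => (hψ z hz).1
  have core := aux_core g S ψ hg (fun z hz => by rw [hgf z hz]; exact hf_pos z hz) hS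
    (fun z hz => by rw [hSF z hz]; linarith [hF_lt z hz]) (by simp [hSdef]) hlim
    (fun y z hy hyz => by
      rw [hgf y hy, hgf z (hy.trans hyz), hSF y hy, hSF z (hy.trans hyz)]
      exact hMHR y z hy hyz)
    hψ0
    (fun z hz => by
      rw [hgf _ (hψ0 z hz), hSF _ (hψ0 z hz), ← hφ _ (hψ z hz).1]; exact (hψ z hz).2)
    hψm hgi hg1 (hmean.congr_fun (hEq fun z y => z * y) measurableSet_Ioi)
  have t1 : ∫ z in Ioi (0:ℝ), (ψ z - z) * (1 - F (ψ z)) * f z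
      = ∫ z in Ioi (0:ℝ), (ψ z - z) * S (ψ z) * g z := by
    refine setIntegral_congr_fun measurableSet_Ioi fun z hz => ?_
    have hz' : 0 ≤ z := le_of_lt hz
    simp only [hgf z hz', hSF _ (hψ0 z hz')]
  have t2 : ∫ z in Ioi (0:ℝ), z * f z = ∫ z in Ioi (0:ℝ), z * g z :=
    setIntegral_congr_fun measurableSet_Ioi (hEq fun z y => z * y)
  have t3 : ∫ z in Ioi (0:ℝ), (ψ z * (1 - F (ψ z)) + F (ψ z) * (ψ 0 * (1 - F (ψ 0)))) * f z
      = ∫ z in Ioi (0:ℝ), (ψ z * S (ψ z) + (1 - S (ψ z)) * (ψ 0 * S (ψ 0))) * g z := by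
    refine setIntegral_congr_fun measurableSet_Ioi fun z hz => ?_
    have hz' : 0 ≤ z := le_of_lt hz
    simp only [hgf z hz', hSF _ (hψ0 z hz'), hSF _ (hψ0 0 le_rfl), sub_sub_cancel]
  rw [t1, t2, t3]
  exact core
end

section
/- Let F be a monotone hazard rate probability distribution supported on the non-negative reals with density f and strictly increasing virtual valuation φ. Then R^2_F := ∫₀^∞ (z·(1−F(z)) + F(z)·R*_F)·f(z) dz satisfies R^2_F = Q_F + R*_F/2 ≥ (1/4 + 1/(2e))·V_F. -/
open MeasureTheory Real Set

lemma aux_ftc (f G : ℝ → ℝ) (hf : ContinuousOn f (Ici 0))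
    (hG : ∀ z ∈ Ici (0:ℝ), G z = ∫ t in (0:ℝ)..z, f t) :
    (∀ z ∈ Ioi (0:ℝ), HasDerivAt G (f z) z) ∧ ContinuousOn G (Ici 0) := by
  have hii : ∀ z ∈ Ici (0:ℝ), IntervalIntegrable f volume 0 z := by
    intro z hz
    apply ContinuousOn.intervalIntegrable
    rw [uIcc_of_le hz]
    exact hf.mono Icc_subset_Ici_self
  have hd : ∀ z ∈ Ioi (0:ℝ), HasDerivAt G (f z) z := by
    intro z hz
    have h1 := intervalIntegral.integral_hasDerivAt_right (hii z (Ioi_subset_Ici_self hz))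
      (ContinuousOn.stronglyMeasurableAtFilter isOpen_Ioi (hf.mono Ioi_subset_Ici_self) z hz)
      (hf.continuousAt (Ici_mem_nhds hz))
    refine h1.congr_of_eventuallyEq ?_
    filter_upwards [Ioi_mem_nhds hz] with y hy
    exact hG y (Ioi_subset_Ici_self hy)
  refine ⟨hd, ?_⟩
  intro z hz
  have hz1 : (0:ℝ) ≤ z + 1 := by have : (0:ℝ) ≤ z := hz; linarith
  have h2 := intervalIntegral.continuousOn_primitive_interval (μ := volume) (a := 0) (b := z+1)
    (f := f) (by rw [uIcc_of_le hz1]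
                 exact (hf.mono Icc_subset_Ici_self).integrableOn_Icc)
  rw [uIcc_of_le hz1] at h2
  have h3 : ContinuousOn G (Icc 0 (z+1)) := h2.congr fun x hx => hG x hx.1
  refine (h3 z ⟨hz, by linarith⟩).mono_of_mem_nhdsWithin ?_
  rw [← Ici_inter_Iic]
  exact inter_mem_nhdsWithin _ (Iic_mem_nhds (by linarith))

/-- abstract survival function bounds -/
lemma aux_max (f S : ℝ → ℝ) (hd : ∀ z ∈ Ioi (0:ℝ), HasDerivAt S (-f z) z)
    (hc : ContinuousOn S (Ici 0)) (hpos : ∀ z ∈ Ici (0:ℝ), 0 < S z)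
    (hm : ∀ y z : ℝ, 0 ≤ y → y ≤ z → f y / S y ≤ f z / S z) (r : ℝ) (hr : 0 ≤ r)
    (z : ℝ) (hz : 0 ≤ z) :
    S z * exp (f r / S r * z) ≤ S r * exp (f r / S r * r) := by
  set c := f r / S r with hcdef
  have hgd : ∀ z ∈ Ioi (0:ℝ), HasDerivAt (fun z => S z * exp (c * z))
      (S z * exp (c*z) * (c - f z / S z)) z := by
    intro z hz
    have h1 := (hd z hz).mul (((hasDerivAt_id z).const_mul c).exp)
    have := (hpos z (Ioi_subset_Ici_self hz)).ne'
    refine HasDerivAt.congr_deriv h1 ?_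
    simp only [id]
    field_simp
    ring
  have hgc : ContinuousOn (fun z => S z * exp (c * z)) (Ici 0) := by fun_prop
  rcases le_total z r with h | h
  · have : MonotoneOn (fun z => S z * exp (c * z)) (Icc 0 r) := by
      refine monotoneOn_of_hasDerivWithinAt_nonneg (convex_Icc 0 r)
        (hgc.mono Icc_subset_Ici_self)
        (f' := fun z => S z * exp (c*z) * (c - f z / S z)) ?_ ?_
      · intro x hx
        rw [interior_Icc] at hx
        exact (hgd x hx.1).hasDerivWithinAt
      · intro x hx
        rw [interior_Icc] at hx
        have := hpos x (le_of_lt hx.1)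
        have h5 := hm x r hx.1.le hx.2.le
        exact mul_nonneg (by positivity) (by linarith)
    exact this ⟨hz, h⟩ ⟨hr, le_rfl⟩ h
  · have : AntitoneOn (fun z => S z * exp (c * z)) (Ici r) := by
      refine antitoneOn_of_hasDerivWithinAt_nonpos (convex_Ici r)
        (hgc.mono (Ici_subset_Ici.2 hr))
        (f' := fun z => S z * exp (c*z) * (c - f z / S z)) ?_ ?_
      · intro x hx
        rw [interior_Ici] at hx
        exact (hgd x (lt_of_le_of_lt hr hx)).hasDerivWithinAt
      · intro x hx
        rw [interior_Ici] at hx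
        have hx0 : 0 < x := lt_of_le_of_lt hr hx
        have := hpos x hx0.le
        have h5 := hm r x hr (le_of_lt hx)
        exact mul_nonpos_of_nonneg_of_nonpos (by positivity) (by linarith)
    exact this (self_mem_Ici) h h

lemma aux_nbu (f S : ℝ → ℝ) (hd : ∀ z ∈ Ioi (0:ℝ), HasDerivAt S (-f z) z)
    (hc : ContinuousOn S (Ici 0)) (hpos : ∀ z ∈ Ici (0:ℝ), 0 < S z) (h0 : S 0 = 1)
    (hm : ∀ y z : ℝ, 0 ≤ y → y ≤ z → f y / S y ≤ f z / S z) (t : ℝ) (ht : 0 ≤ t)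
    (z : ℝ) (hz : 0 ≤ z) : S (t + z) ≤ S z * S t := by
  have : AntitoneOn (fun z => S (t + z) / S z) (Ici 0) := by
    refine antitoneOn_of_hasDerivWithinAt_nonpos (convex_Ici 0) ?_
      (f' := fun z => (-f (t+z) * S z - S (t+z) * (-f z)) / S z ^ 2) ?_ ?_
    · refine ContinuousOn.div (hc.comp (by fun_prop) ?_) hc fun x hx => (hpos x hx).ne'
      intro x hx
      have : (0:ℝ) ≤ x := hx
      show (0:ℝ) ≤ t + x
      linarith
    · intro x hx
      rw [interior_Ici] at hx
      have hx' : (0:ℝ) < x := hx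
      have h1 := (hd (t+x) (by show (0:ℝ) < t + x; linarith)).comp_const_add t x
      exact (h1.div (hd x hx) (hpos x hx'.le).ne').hasDerivWithinAt
    · intro x hx
      rw [interior_Ici] at hx
      have hx' : (0:ℝ) < x := hx
      have h1 := hm x (t+x) hx'.le (by linarith)
      have h2 := hpos x hx'.le
      have h3 := hpos (t+x) (by show (0:ℝ) ≤ t + x; linarith)
      rw [div_le_div_iff₀ h2 h3] at h1
      exact div_nonpos_of_nonpos_of_nonneg (by nlinarith) (by positivity)
  have h := this (self_mem_Ici) hz hz
  simp only [add_zero, h0, div_one] at h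
  rw [div_le_iff₀ (hpos z hz)] at h
  linarith

theorem stmt_12
(f F : ℝ → ℝ)
    (hf_cont : ContinuousOn f (Ici 0))
    (hf_pos : ∀ z ∈ Ici (0:ℝ), 0 < f z)
    (hF : ∀ z ∈ Ici (0:ℝ), F z = ∫ t in (0:ℝ)..z, f t)
    (hF_lt : ∀ z ∈ Ici (0:ℝ), F z < 1)
    (hprob : ∫ z in Ioi (0:ℝ), f z = 1)
(hMHR : ∀ y z : ℝ, 0 ≤ y → y ≤ z → f y / (1 - F y) ≤ f z / (1 - F z))
(φ ψ : ℝ → ℝ)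
    (hφ : ∀ z ∈ Ici (0:ℝ), φ z = z - (1 - F z) / f z)
    (hφ_mono : StrictMonoOn φ (Ici 0))
    (hφ_top : Filter.Tendsto φ Filter.atTop Filter.atTop)
    (hψ : ∀ y ∈ Ici (0:ℝ), ψ y ∈ Ici (0:ℝ) ∧ φ (ψ y) = y)
(hmean : IntegrableOn (fun z => z * f z) (Ioi 0)) :
    (∫ z in Ioi (0:ℝ), (z * (1 - F z) + F z * (ψ 0 * (1 - F (ψ 0)))) * f z)
      = (∫ z in Ioi (0:ℝ), z * (1 - F z) * f z) + (ψ 0 * (1 - F (ψ 0))) / 2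
    ∧ (∫ z in Ioi (0:ℝ), (z * (1 - F z) + F z * (ψ 0 * (1 - F (ψ 0)))) * f z)
      ≥ (1/4 + 1 / (2 * Real.exp 1)) * ∫ z in Ioi (0:ℝ), z * f z := by
  obtain ⟨hFd, hFc⟩ := aux_ftc f F hf_cont hF
  have hF0 : F 0 = 0 := by rw [hF 0 self_mem_Ici]; simp
  obtain ⟨hr0, hφr⟩ := hψ 0 self_mem_Ici
  set r := ψ 0 with hr
  have hr0' : (0:ℝ) ≤ r := hr0
  set S : ℝ → ℝ := fun z => 1 - F z with hSdef
  have hSd : ∀ z ∈ Ioi (0:ℝ), HasDerivAt S (-f z) z := fun z hz => (hFd z hz).const_sub 1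
  have hSc : ContinuousOn S (Ici 0) := continuousOn_const.sub hFc
  have hSpos : ∀ z ∈ Ici (0:ℝ), 0 < S z := fun z hz => sub_pos.2 (hF_lt z hz)
  have hS0 : S 0 = 1 := by simp [hSdef, hF0]
  have hm : ∀ y z : ℝ, 0 ≤ y → y ≤ z → f y / S y ≤ f z / S z := hMHR
  have hF_nn : ∀ z ∈ Ici (0:ℝ), 0 ≤ F z := by
    intro z hz
    rw [hF z hz]
    exact intervalIntegral.integral_nonneg hz fun u hu => (hf_pos u hu.1).le
  have hSle : ∀ z ∈ Ici (0:ℝ), S z ≤ 1 := fun z hz => by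
    have := hF_nn z hz
    simp only [hSdef]; linarith
  have hfint : IntegrableOn f (Ioi 0) := by
    by_contra h
    rw [integral_undef h] at hprob
    norm_num at hprob
  have hFlim : Filter.Tendsto F Filter.atTop (nhds 1) := by
    have := intervalIntegral_tendsto_integral_Ioi 0 hfint Filter.tendsto_id
    rw [hprob] at this
    refine this.congr' ?_
    filter_upwards [Filter.eventually_ge_atTop 0] with z hz
    exact (hF z hz).symm
  have hmeas : ∀ g : ℝ → ℝ, ContinuousOn g (Ici 0) →
      AEStronglyMeasurable g (volume.restrict (Ioi 0)) := fun g hg =>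
    (hg.mono Ioi_subset_Ici_self).aestronglyMeasurable measurableSet_Ioi
  have hdom : ∀ g b : ℝ → ℝ, ContinuousOn g (Ici 0) → IntegrableOn b (Ioi 0) →
      (∀ z ∈ Ioi (0:ℝ), 0 ≤ g z ∧ g z ≤ b z) → IntegrableOn g (Ioi 0) := by
    intro g b hg hb hgb
    refine Integrable.mono' hb (hmeas g hg) ?_
    filter_upwards [ae_restrict_mem measurableSet_Ioi] with z hz
    rw [norm_eq_abs, abs_of_nonneg (hgb z hz).1]
    exact (hgb z hz).2
  have hbd : ∀ z ∈ Ioi (0:ℝ), 0 < z ∧ 0 < f z ∧ 0 < S z ∧ S z ≤ 1 ∧ 0 ≤ F z ∧ F z < 1 :=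
    fun z hz => ⟨hz, hf_pos z (Ioi_subset_Ici_self hz), hSpos z (Ioi_subset_Ici_self hz), hSle z (Ioi_subset_Ici_self hz),
      hF_nn z (Ioi_subset_Ici_self hz), hF_lt z (Ioi_subset_Ici_self hz)⟩
  -- r
  have hfr := hf_pos r hr0
  have hSr := hSpos r hr0
  have hrS : r * f r = S r := by
    rw [hφ r hr0] at hφr
    have : r = S r / f r := by simp only [hSdef]; linarith
    rw [eq_div_iff hfr.ne'] at this
    exact this
  have hrpos : 0 < r := by
    by_contra h
    have : r = 0 := le_antisymm (not_lt.1 h) hr0'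
    rw [this] at hrS
    rw [this] at hSr
    linarith
  set c := f r / S r with hcdef
  have hcpos : 0 < c := by positivity
  have hcr : c * r = 1 := by rw [hcdef, ← hrS]; field_simp
  have hexp : ∀ z ∈ Ici (0:ℝ), S z ≤ S r * exp 1 * exp (-c * z) := by
    intro z hz
    have h := aux_max f S hSd hSc hSpos hm r hr0' z hz
    rw [← hcdef, hcr] at h
    have h2 : exp (c * z) * exp (-c * z) = 1 := by rw [← exp_add]; simp
    calc S z = S z * exp (c*z) * exp (-c*z) := by rw [mul_assoc, h2, mul_one]
      _ ≤ _ := by gcongr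
  have hEint : IntegrableOn (fun z => S r * exp 1 * exp (-c * z)) (Ioi 0) :=
    (exp_neg_integrableOn_Ioi 0 hcpos).const_mul _
  have hSint : IntegrableOn S (Ioi 0) := hdom S _ hSc hEint fun z hz =>
    ⟨(hbd z hz).2.2.1.le, hexp z (Ioi_subset_Ici_self hz)⟩
  set V := ∫ z in Ioi (0:ℝ), z * f z with hV
  have hzSlim : Filter.Tendsto (fun z => z * S z) Filter.atTop (nhds 0) := by
    have h1 := (tendsto_pow_mul_exp_neg_atTop_nhds_zero 1).comp
      (Filter.tendsto_id.const_mul_atTop hcpos)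
    have h2 := h1.const_mul (S r * exp 1 / c)
    rw [mul_zero] at h2
    refine tendsto_of_tendsto_of_tendsto_of_le_of_le' tendsto_const_nhds h2 ?_ ?_
    · filter_upwards [Filter.eventually_gt_atTop 0] with z hz
      exact mul_nonneg hz.le (hbd z hz).2.2.1.le
    · filter_upwards [Filter.eventually_gt_atTop 0] with z hz
      have := mul_le_mul_of_nonneg_left (hexp z hz.le) hz.le
      refine this.trans (le_of_eq ?_)
      simp only [Function.comp, id, pow_one, neg_mul]
      field_simp
  have hSlim : Filter.Tendsto S Filter.atTop (nhds 0) := by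
    simpa using hFlim.const_sub 1
  have hzf_c : ContinuousOn (fun z => z * f z) (Ici 0) := by fun_prop
  have hVS : V = ∫ z in Ioi (0:ℝ), S z := by
    have h := integral_Ioi_of_hasDerivAt_of_tendsto (a := 0) (f := fun z => z * S z)
      (f' := fun z => S z - z * f z) (m := 0)
      ((continuousOn_id.mul hSc) 0 self_mem_Ici)
      (fun z hz => by
        refine HasDerivAt.congr_deriv ((hasDerivAt_id z).mul (hSd z hz)) ?_
        simp only [id]; ring) (hSint.sub hmean) hzSlim
    rw [integral_sub hSint hmean] at h
    linarith
  have hV0 : 0 ≤ V := setIntegral_nonneg measurableSet_Ioi fun z hz =>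
    mul_nonneg (hbd z hz).1.le (hbd z hz).2.1.le
  -- R* bound
  have hR : V ≤ exp 1 * (r * S r) := by
    rw [hVS]
    have h := setIntegral_mono_on hSint hEint measurableSet_Ioi
      (fun z hz => hexp z (Ioi_subset_Ici_self hz))
    rw [integral_const_mul, integral_exp_mul_Ioi (by linarith)] at h
    refine h.trans (le_of_eq ?_)
    have : r = 1 / c := by field_simp; linarith
    rw [mul_zero, exp_zero, neg_div_neg_eq, ← this]
    ring
  -- Q
  have hQint : IntegrableOn (fun z => z * S z * f z) (Ioi 0) := by
    refine hdom _ _ (by fun_prop) hmean fun z hz => ?_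
    obtain ⟨h1, h2, h3, h4, -, -⟩ := hbd z hz
    refine ⟨by positivity, ?_⟩
    have : 0 < z * f z := by positivity
    nlinarith
  have hS2int : IntegrableOn (fun z => S z ^ 2) (Ioi 0) := by
    refine hdom _ _ (by fun_prop) hSint fun z hz => ?_
    obtain ⟨h1, h2, h3, h4, -, -⟩ := hbd z hz
    exact ⟨by positivity, by nlinarith⟩
  have hQ : 2 * ∫ z in Ioi (0:ℝ), z * S z * f z = ∫ z in Ioi (0:ℝ), S z ^ 2 := by
    have h := integral_Ioi_of_hasDerivAt_of_tendsto (a := 0) (f := fun z => (z * S z) * S z)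
      (f' := fun z => S z ^ 2 - 2 * (z * S z * f z)) (m := 0)
      (((continuousOn_id.mul hSc).mul hSc) 0 self_mem_Ici)
      (fun z hz => by
        refine HasDerivAt.congr_deriv (((hasDerivAt_id z).mul (hSd z hz)).mul (hSd z hz)) ?_
        simp only [id, Pi.mul_apply]; ring) (hS2int.sub (hQint.const_mul 2))
        (by simpa using hzSlim.mul hSlim)
    rw [integral_sub hS2int (hQint.const_mul 2), integral_const_mul] at h
    linarith
  -- F f
  have hFfint : IntegrableOn (fun z => F z * f z) (Ioi 0) := by
    refine hdom _ _ (by fun_prop) hfint fun z hz => ?_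
    obtain ⟨h1, h2, h3, h4, h5, h6⟩ := hbd z hz
    exact ⟨by positivity, by nlinarith⟩
  have hFf : ∫ z in Ioi (0:ℝ), F z * f z = 1 / 2 := by
    have h := integral_Ioi_of_hasDerivAt_of_tendsto (a := 0) (f := fun z => F z * F z)
      (f' := fun z => 2 * (F z * f z)) (m := 1)
      ((hFc.mul hFc) 0 self_mem_Ici)
      (fun z hz => by
        refine HasDerivAt.congr_deriv ((hFd z hz).mul (hFd z hz)) ?_
        ring) (hFfint.const_mul 2)
        (by simpa using hFlim.mul hFlim)
    rw [integral_const_mul, hF0] at h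
    linarith
  -- T
  obtain ⟨hGd, hGc⟩ := aux_ftc S (fun z => ∫ t in (0:ℝ)..z, S t) hSc (fun z _ => rfl)
  set G : ℝ → ℝ := fun z => ∫ t in (0:ℝ)..z, S t with hG
  have hGlim : Filter.Tendsto G Filter.atTop (nhds V) := by
    rw [hVS]
    exact intervalIntegral_tendsto_integral_Ioi 0 hSint Filter.tendsto_id
  have hT : ∀ z ∈ Ioi (0:ℝ), V - G z = ∫ t in Ioi z, S t := by
    intro z hz
    have := intervalIntegral.integral_interval_add_Ioi hSint
      (hSint.mono_set (Ioi_subset_Ioi (le_of_lt hz)))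
    rw [hVS, ← this]
    simp only [hG]; ring
  have hT0 : ∀ z ∈ Ioi (0:ℝ), 0 ≤ V - G z := by
    intro z hz
    rw [hT z hz]
    exact setIntegral_nonneg measurableSet_Ioi fun t ht => (hSpos t (mem_Ici.2 ((mem_Ioi.1 hz).le.trans (mem_Ioi.1 ht).le))).le
  have hTS : ∀ z ∈ Ioi (0:ℝ), V - G z ≤ S z * V := by
    intro z hz
    have h1 := (measurePreserving_add_right (volume : Measure ℝ) z).setIntegral_preimage_emb
      (measurableEmbedding_addRight z) S (Ioi z)
    rw [hT z hz, ← h1, hVS, ← integral_const_mul]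
    have : (fun x : ℝ => x + z) ⁻¹' Ioi z = Ioi 0 := by ext x; simp
    rw [this]
    refine integral_mono_of_nonneg ?_ (hSint.const_mul _) ?_
    · filter_upwards [ae_restrict_mem measurableSet_Ioi] with t ht
      exact (hSpos _ (mem_Ici.2 (add_nonneg (mem_Ioi.1 ht).le (mem_Ioi.1 hz).le))).le
    · filter_upwards [ae_restrict_mem measurableSet_Ioi] with t ht
      exact aux_nbu f S hSd hSc hSpos hS0 hm t (le_of_lt ht) z (le_of_lt hz)
  have hTSint : IntegrableOn (fun z => (V - G z) * S z) (Ioi 0) := by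
    refine hdom _ _ (by fun_prop) (hS2int.const_mul V) fun z hz => ?_
    obtain ⟨h1, h2, h3, h4, -, -⟩ := hbd z hz
    have := hT0 z hz
    have := hTS z hz
    exact ⟨by positivity, by nlinarith⟩
  have hTSval : 2 * ∫ z in Ioi (0:ℝ), (V - G z) * S z = V * V := by
    have h := integral_Ioi_of_hasDerivAt_of_tendsto (a := 0)
      (f := fun z => -((V - G z) * (V - G z)))
      (f' := fun z => 2 * ((V - G z) * S z)) (m := 0)
      (by 
        have : ContinuousOn (fun z => -((V - G z) * (V - G z))) (Ici 0) := by fun_prop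
        exact this 0 self_mem_Ici)
      (fun z hz => by
        have h1 := (hGd z hz).const_sub V
        refine HasDerivAt.congr_deriv ((h1.mul h1).neg) ?_
        ring) (hTSint.const_mul 2)
        (by 
          have h1 := hGlim.const_sub V
          simpa using (h1.mul h1).neg)
    have hG0 : G 0 = 0 := by simp [hG]
    rw [integral_const_mul, hG0] at h
    linarith
  have hfin : V * V ≤ 2 * (V * ∫ z in Ioi (0:ℝ), S z ^ 2) := by
    rw [← hTSval, ← integral_const_mul V]
    refine mul_le_mul_of_nonneg_left ?_ (by norm_num)
    refine setIntegral_mono_on hTSint (hS2int.const_mul V) measurableSet_Ioi fun z hz => ?_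
    have h3 := (hbd z hz).2.2.1
    have := hTS z hz
    nlinarith
  have hS2 : V / 2 ≤ ∫ z in Ioi (0:ℝ), S z ^ 2 := by
    rcases hV0.eq_or_lt with h | h
    · rw [← h]
      simpa using setIntegral_nonneg measurableSet_Ioi fun z _ => sq_nonneg (S z)
    · have : V ≤ 2 * ∫ z in Ioi (0:ℝ), S z ^ 2 := by
        by_contra hh
        nlinarith
      linarith
  have hEq : (∫ z in Ioi (0:ℝ), (z * (1 - F z) + F z * (r * (1 - F r))) * f z)
      = (∫ z in Ioi (0:ℝ), z * (1 - F z) * f z) + (r * (1 - F r)) / 2 := by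
    have h1 : (fun z => (z * (1 - F z) + F z * (r * (1 - F r))) * f z) =
      fun z => z * S z * f z + (r * (1 - F r)) * (F z * f z) := by
      funext z; simp only [hSdef]; ring
    rw [h1, integral_add hQint (hFfint.const_mul _), integral_const_mul, hFf]
    simp only [hSdef]; ring
  refine ⟨hEq, ?_⟩
  rw [hEq, ge_iff_le]
  have e1 : (∫ z in Ioi (0:ℝ), z * (1 - F z) * f z) = ∫ z in Ioi (0:ℝ), z * S z * f z := rfl
  have e2 : r * (1 - F r) = r * S r := rfl
  have e3 : V / exp 1 ≤ r * S r := by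
    rw [div_le_iff₀ (exp_pos 1)]; linarith
  have e4 : (1/4 + 1 / (2 * exp 1)) * V = V / 4 + V / exp 1 / 2 := by
    have := exp_pos 1
    field_simp
  rw [e1, e2, e4]
  linarith
end

section
/- Let λ > 0 and let F be the exponential distribution with F(z) = 1 − e^{−λz} and density f(z) = λe^{−λz} on [0,∞). Then the revenues of the optimal-consistency mechanism satisfy R^s_F = ∫₀^∞ φ⁻¹(z)·(1−F(φ⁻¹(z)))·f(z) dz = 3/(4λe) and R^h_F = ∫₀^∞ z·F(φ⁻¹(z))·f(z) dz = 1/λ − 1/(4λe); consequently (R^s_F + R^h_F)/R^s_F = (4e+2)/3 ≈ 4.291. -/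
open MeasureTheory Real Set

lemma aux (b p q : ℝ) (hb : 0 < b) (hp : 0 ≤ p) (hq : 0 ≤ q) :
    IntegrableOn (fun z : ℝ => (p * z + q) * Real.exp (-(b * z))) (Ioi 0) ∧
    ∫ z in Ioi (0:ℝ), (p * z + q) * Real.exp (-(b * z)) = q / b + p / b ^ 2 := by
  have hd : ∀ x ∈ Ici (0:ℝ), HasDerivAt
      (fun z : ℝ => -((p * z + q) / b + p / b ^ 2) * Real.exp (-(b * z)))
      ((p * x + q) * Real.exp (-(b * x))) x := by
    intro x _
    have h1 : HasDerivAt (fun z : ℝ => -((p * z + q) / b + p / b ^ 2)) (-((p * 1) / b)) x :=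
      (((((hasDerivAt_id x).const_mul p).add_const q).div_const b).add_const _).neg
    have h2 : HasDerivAt (fun z : ℝ => Real.exp (-(b * z)))
        (Real.exp (-(b * x)) * -(b * 1)) x :=
      (((hasDerivAt_id x).const_mul b).neg).exp
    refine (h1.mul h2).congr_deriv ?_
    field_simp
    ring
  have hpos : ∀ x ∈ Ioi (0:ℝ), 0 ≤ (p * x + q) * Real.exp (-(b * x)) := by
    intro x hx
    have : 0 < x := hx
    positivity
  have e0 : Filter.Tendsto (fun z : ℝ => b * z) Filter.atTop Filter.atTop :=
    Filter.tendsto_id.const_mul_atTop hb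
  have e1 := (Real.tendsto_pow_mul_exp_neg_atTop_nhds_zero 1).comp e0
  have e2 := (Real.tendsto_pow_mul_exp_neg_atTop_nhds_zero 0).comp e0
  have ht : Filter.Tendsto
      (fun z : ℝ => -((p * z + q) / b + p / b ^ 2) * Real.exp (-(b * z)))
      Filter.atTop (nhds 0) := by
    have := (e1.const_mul (-(p / b ^ 2))).add (e2.const_mul (-(q / b + p / b ^ 2)))
    simp only [mul_zero, add_zero] at this
    refine this.congr fun z => ?_
    simp only [Function.comp, pow_one, pow_zero]
    field_simp
    ring
  refine ⟨integrableOn_Ioi_deriv_of_nonneg' hd hpos ht, ?_⟩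
  rw [integral_Ioi_of_hasDerivAt_of_nonneg' hd hpos ht]
  simp

theorem stmt_15
    (l : ℝ) (hl : 0 < l)
    (F f φ ψ : ℝ → ℝ)
    (hF : ∀ z : ℝ, 0 ≤ z → F z = 1 - Real.exp (-(l * z)))
    (hf : ∀ z : ℝ, 0 ≤ z → f z = l * Real.exp (-(l * z)))
    (hφ : ∀ z : ℝ, 0 ≤ z → φ z = z - 1/l)
    (hψ : ∀ y : ℝ, 0 ≤ y → ψ y = y + 1/l) :
    (∫ z in Ioi (0:ℝ), ψ z * (1 - F (ψ z)) * f z) = 3 / (4 * l * Real.exp 1)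
    ∧ (∫ z in Ioi (0:ℝ), z * F (ψ z) * f z) = 1/l - 1 / (4 * l * Real.exp 1)
    ∧ ((∫ z in Ioi (0:ℝ), ψ z * (1 - F (ψ z)) * f z)
          + (∫ z in Ioi (0:ℝ), z * F (ψ z) * f z))
        / (∫ z in Ioi (0:ℝ), ψ z * (1 - F (ψ z)) * f z)
      = (4 * Real.exp 1 + 2) / 3 := by
  have hl' : (0:ℝ) < 1 / l := by positivity
  have hE : ∀ z : ℝ, Real.exp (-(l * (z + 1 / l))) =
      (Real.exp 1)⁻¹ * Real.exp (-(l * z)) := by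
    intro z
    rw [← Real.exp_neg, ← Real.exp_add]
    congr 1
    field_simp
    ring
  have hE2 : ∀ z : ℝ, Real.exp (-(2 * l * z)) =
      Real.exp (-(l * z)) * Real.exp (-(l * z)) := by
    intro z
    rw [← Real.exp_add]
    congr 1
    ring
  have he := Real.exp_pos 1
  have A : (∫ z in Ioi (0:ℝ), ψ z * (1 - F (ψ z)) * f z) = 3 / (4 * l * Real.exp 1) := by
    have h := (aux (2 * l) (l / Real.exp 1) (1 / Real.exp 1) (by positivity) (by positivity)
      (by positivity)).2
    rw [setIntegral_congr_fun (g := fun z : ℝ => (l / Real.exp 1 * z + 1 / Real.exp 1)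
      * Real.exp (-(2 * l * z))) measurableSet_Ioi, h]
    · field_simp
      norm_num
    · intro z hz
      have hz : 0 < z := hz
      simp only
      rw [hψ z hz.le, hF _ (by positivity), hf z hz.le, hE, hE2]
      field_simp
      ring
  have B : (∫ z in Ioi (0:ℝ), z * F (ψ z) * f z) = 1/l - 1 / (4 * l * Real.exp 1) := by
    have h1 := aux l l 0 hl hl.le le_rfl
    have h2 := aux (2 * l) (l / Real.exp 1) 0 (by positivity) (by positivity) le_rfl
    rw [setIntegral_congr_fun (g := fun z : ℝ => (l * z + 0) * Real.exp (-(l * z)) -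
      (l / Real.exp 1 * z + 0) * Real.exp (-(2 * l * z))) measurableSet_Ioi,
      integral_sub h1.1 h2.1, h1.2, h2.2]
    · field_simp
      ring
    · intro z hz
      have hz : 0 < z := hz
      simp only
      rw [hψ z hz.le, hF _ (by positivity), hf z hz.le, hE, hE2]
      field_simp
      ring
  refine ⟨A, B, ?_⟩
  rw [A, B]
  field_simp
  ring
end

section
/- Let λ > 0 and let F be the exponential distribution with F(z) = 1 − e^{−λz} on [0,∞). Then R*_F = 1/(λe), the expected revenue of the optimal prediction-ignoring mechanism equals φ⁻¹(R*_F)·(1−F(φ⁻¹(R*_F))) + F(φ⁻¹(R*_F))·R*_F = (1/λ)·(e^{−1−1/e} + 1/e), and the ratio of the optimal expected revenue R^s_F + R^h_F = (1/λ)·(1 + 1/(2e)) to this quantity equals (e + 1/2)/(1 + e^{−1/e}) ≈ 1.902. -/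
open MeasureTheory Real Set

lemma aux_exp (b : ℝ) (hb : 0 < b) :
    IntegrableOn (fun z : ℝ => Real.exp (-(b * z))) (Ioi 0) ∧
    ∫ z in Ioi (0:ℝ), Real.exp (-(b * z)) = 1 / b := by
  constructor
  · have := exp_neg_integrableOn_Ioi 0 hb
    simpa [neg_mul] using this
  · have := integral_exp_mul_Ioi (a := -b) (by linarith) 0
    simp only [neg_mul] at this
    rw [this]
    simp

lemma aux_mul (b : ℝ) (hb : 0 < b) :
    IntegrableOn (fun z : ℝ => z * Real.exp (-(b * z))) (Ioi 0) ∧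
    ∫ z in Ioi (0:ℝ), z * Real.exp (-(b * z)) = 1 / b ^ 2 := by
  constructor
  · have := integrableOn_rpow_mul_exp_neg_mul_rpow (p := 1) (s := 1) (b := b) (by norm_num) (by norm_num) hb
    simpa [neg_mul] using this
  · have := Real.integral_rpow_mul_exp_neg_mul_Ioi (a := 2) (r := b) (by norm_num) hb
    have h2 : (2:ℝ) - 1 = 1 := by norm_num
    simp only [h2, Real.rpow_one, Real.Gamma_two, mul_one] at this
    rw [this]
    rw [Real.rpow_two, div_pow, one_pow]

theorem stmt_16
    (l : ℝ) (hl : 0 < l)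
    (F f φ ψ : ℝ → ℝ)
    (hF : ∀ z : ℝ, 0 ≤ z → F z = 1 - Real.exp (-(l * z)))
    (hf : ∀ z : ℝ, 0 ≤ z → f z = l * Real.exp (-(l * z)))
    (hφ : ∀ z : ℝ, 0 ≤ z → φ z = z - 1/l)
    (hψ : ∀ y : ℝ, 0 ≤ y → ψ y = y + 1/l) :
    ψ 0 * (1 - F (ψ 0)) = 1 / (l * Real.exp 1)
    ∧ ψ (ψ 0 * (1 - F (ψ 0))) * (1 - F (ψ (ψ 0 * (1 - F (ψ 0)))))
        + F (ψ (ψ 0 * (1 - F (ψ 0)))) * (ψ 0 * (1 - F (ψ 0)))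
      = (1/l) * (Real.exp (-1 - 1 / Real.exp 1) + 1 / Real.exp 1)
    ∧ (∫ z in Ioi (0:ℝ), ψ z * (1 - F (ψ z)) * f z)
        + (∫ z in Ioi (0:ℝ), z * F (ψ z) * f z)
      = (1/l) * (1 + 1 / (2 * Real.exp 1))
    ∧ ((1/l) * (1 + 1 / (2 * Real.exp 1)))
        / ((1/l) * (Real.exp (-1 - 1 / Real.exp 1) + 1 / Real.exp 1))
      = (Real.exp 1 + 1/2) / (1 + Real.exp (-(1 / Real.exp 1))) := by
  have hl' : l ≠ 0 := hl.ne'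
  have hψF : ∀ z : ℝ, 0 ≤ z → F (ψ z) = 1 - Real.exp (-1) * Real.exp (-(l * z)) := by
    intro z hz
    rw [hψ z hz, hF _ (by positivity), ← Real.exp_add]
    congr 2
    field_simp
    ring
  have h1 : ψ 0 * (1 - F (ψ 0)) = 1 / (l * Real.exp 1) := by
    rw [hψF 0 le_rfl, hψ 0 le_rfl, Real.exp_neg]
    simp
    ring
  refine ⟨h1, ?_, ?_, ?_⟩
  · rw [h1]
    have hR : 0 ≤ 1 / (l * Real.exp 1) := by positivity
    have e1 : Real.exp (-1 - 1 / Real.exp 1)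
        = Real.exp (-1) * Real.exp (-(l * (1 / (l * Real.exp 1)))) := by
      rw [← Real.exp_add]
      congr 1
      field_simp
      ring
    rw [hψF _ hR, hψ _ hR, e1]
    field_simp
    ring
  · obtain ⟨i1, v1⟩ := aux_exp (2 * l) (by positivity)
    obtain ⟨i2, v2⟩ := aux_mul l hl
    obtain ⟨i3, v3⟩ := aux_mul (2 * l) (by positivity)
    have hsq : ∀ z : ℝ, Real.exp (-(2 * l * z)) = Real.exp (-(l * z)) * Real.exp (-(l * z)) := by
      intro z
      rw [← Real.exp_add]
      congr 1
      ring
    have a1 : ∫ z in Ioi (0:ℝ), ψ z * (1 - F (ψ z)) * f z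
        = ∫ z in Ioi (0:ℝ), ((l * Real.exp (-1)) * (z * Real.exp (-(2 * l * z)))
          + Real.exp (-1) * Real.exp (-(2 * l * z))) := by
      refine setIntegral_congr_fun measurableSet_Ioi fun z hz => ?_
      have hz : 0 ≤ z := le_of_lt hz
      rw [hψF z hz, hψ z hz, hf z hz, hsq]
      field_simp
      ring
    have a2 : ∫ z in Ioi (0:ℝ), z * F (ψ z) * f z
        = ∫ z in Ioi (0:ℝ), (l * (z * Real.exp (-(l * z)))
          - (l * Real.exp (-1)) * (z * Real.exp (-(2 * l * z)))) := by
      refine setIntegral_congr_fun measurableSet_Ioi fun z hz => ?_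
      have hz : 0 ≤ z := le_of_lt hz
      rw [hψF z hz, hf z hz, hsq]
      ring
    rw [a1, a2, integral_add (i3.const_mul _) (i1.const_mul _),
      integral_sub (i2.const_mul _) (i3.const_mul _)]
    simp only [integral_const_mul]
    rw [v1, v2, v3, Real.exp_neg]
    field_simp
    ring
  · have e1 : Real.exp (-1 - 1 / Real.exp 1)
        = (Real.exp 1)⁻¹ * Real.exp (-(1 / Real.exp 1)) := by
      rw [← Real.exp_neg, ← Real.exp_add]
      congr 1
    rw [e1]
    generalize hE : Real.exp (-(1 / Real.exp 1)) = E
    have hE0 : 0 < E := hE ▸ Real.exp_pos _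
    have : 0 < Real.exp 1 := Real.exp_pos _
    rw [div_eq_div_iff (by positivity) (by positivity)]
    field_simp
    ring
end

section
/- Let F be a probability distribution supported on the non-negative reals with continuous, strictly positive density f and F(z) < 1 for all z ≥ 0, and with non-decreasing hazard rate h(z) = f(z)/(1−F(z)). Then for every z ≥ 0, 1 − F(z) = exp(−∫₀^z h(y) dy), and consequently (1−F(φ⁻¹(z)))/(1−F(z)) = exp(−∫_z^{φ⁻¹(z)} h(y) dy) ≥ 1/e, where φ(z) = z − (1−F(z))/f(z) is the (strictly increasing) virtual valuation and φ⁻¹ its inverse on [0,∞). -/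
open MeasureTheory Real Set

theorem stmt_17
(f F : ℝ → ℝ)
    (hf_cont : ContinuousOn f (Ici 0))
    (hf_pos : ∀ z ∈ Ici (0:ℝ), 0 < f z)
    (hF : ∀ z ∈ Ici (0:ℝ), F z = ∫ t in (0:ℝ)..z, f t)
    (hF_lt : ∀ z ∈ Ici (0:ℝ), F z < 1)
    (hprob : ∫ z in Ioi (0:ℝ), f z = 1)
(hMHR : ∀ y z : ℝ, 0 ≤ y → y ≤ z → f y / (1 - F y) ≤ f z / (1 - F z))
(φ ψ : ℝ → ℝ)
    (hφ : ∀ z ∈ Ici (0:ℝ), φ z = z - (1 - F z) / f z)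
    (hφ_mono : StrictMonoOn φ (Ici 0))
    (hφ_top : Filter.Tendsto φ Filter.atTop Filter.atTop)
    (hψ : ∀ y ∈ Ici (0:ℝ), ψ y ∈ Ici (0:ℝ) ∧ φ (ψ y) = y) :
    ∀ z : ℝ, 0 ≤ z →
      (1 - F z = Real.exp (-∫ y in (0:ℝ)..z, f y / (1 - F y)))
      ∧ (1 - F (ψ z)) / (1 - F z)
          = Real.exp (-∫ y in z..(ψ z), f y / (1 - F y))
      ∧ (1 - F (ψ z)) / (1 - F z) ≥ 1 / Real.exp 1 := by
  have hint : ∀ a b : ℝ, 0 ≤ a → a ≤ b → IntervalIntegrable f volume a b := by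
    intro a b ha hab
    apply ContinuousOn.intervalIntegrable
    rw [uIcc_of_le hab]
    exact hf_cont.mono (fun x hx => le_trans ha hx.1)
  have hFc : ContinuousOn F (Ici 0) := by
    have key : ∀ b : ℝ, 0 ≤ b → ContinuousOn F (Icc 0 b) := by
      intro b hb
      have h1 : ContinuousOn (fun x => ∫ t in (0:ℝ)..x, f t) (Icc 0 b) := by
        have := intervalIntegral.continuousOn_primitive_interval (μ := volume) (f := f) (a := 0) (b := b)
          (by
            rw [uIcc_of_le hb]
            exact (hf_cont.mono (fun x hx => hx.1)).integrableOn_Icc)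
        rwa [uIcc_of_le hb] at this
      exact h1.congr (fun x hx => hF x hx.1)
    intro x hx
    have hx0 : (0:ℝ) ≤ x := hx
    have h2 := key (x + 1) (by linarith) x ⟨hx0, by linarith⟩
    refine h2.mono_of_mem_nhdsWithin ?_
    rw [← Ici_inter_Iic]
    exact Filter.inter_mem self_mem_nhdsWithin
      (mem_nhdsWithin_of_mem_nhds (Iic_mem_nhds (by linarith)))
  have hFd : ∀ x : ℝ, 0 < x → HasDerivAt F (f x) x := by
    intro x hx
    have hca : ContinuousAt f x := hf_cont.continuousAt (Ici_mem_nhds hx)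
    have h1 : HasDerivAt (fun u => ∫ t in (0:ℝ)..u, f t) (f x) x := by
      apply intervalIntegral.integral_hasDerivAt_right (hint 0 x le_rfl hx.le) _ hca
      exact ContinuousOn.stronglyMeasurableAtFilter isOpen_Ioi
        (hf_cont.mono Ioi_subset_Ici_self) x hx
    refine h1.congr_of_eventuallyEq ?_
    filter_upwards [Ici_mem_nhds hx] with y hy using hF y hy
  have hpos : ∀ x : ℝ, 0 ≤ x → 0 < 1 - F x := fun x hx => by
    have := hF_lt x hx
    linarith
  have hhc : ContinuousOn (fun y => f y / (1 - F y)) (Ici 0) :=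
    hf_cont.div (continuousOn_const.sub hFc) (fun x hx => (hpos x hx).ne')
  have hhint : ∀ a b : ℝ, 0 ≤ a → a ≤ b →
      IntervalIntegrable (fun y => f y / (1 - F y)) volume a b := by
    intro a b ha hab
    apply ContinuousOn.intervalIntegrable
    rw [uIcc_of_le hab]
    exact hhc.mono (fun x hx => le_trans ha hx.1)
  have main : ∀ a b : ℝ, 0 ≤ a → a ≤ b →
      ∫ y in a..b, f y / (1 - F y) = Real.log (1 - F a) - Real.log (1 - F b) := by
    intro a b ha hab
    have := intervalIntegral.integral_eq_sub_of_hasDerivAt_of_le (a := a) (b := b)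
      (f := fun x => - Real.log (1 - F x)) (f' := fun y => f y / (1 - F y)) hab
      (by
        apply ContinuousOn.neg
        apply ContinuousOn.log
        · exact continuousOn_const.sub (hFc.mono (fun x hx => le_trans ha hx.1))
        · exact fun x hx => (hpos x (le_trans ha hx.1)).ne')
      (by
        intro x hx
        have hx0 : 0 < x := lt_of_le_of_lt ha hx.1
        have h3 := (((hFd x hx0).const_sub 1).log (hpos x hx0.le).ne').neg
        convert h3 using 1
        · rfl
        · ring)
      (hhint a b ha hab)
    rw [this]
    ring
  have hF0 : F 0 = 0 := by simpa using hF 0 (by simp)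
  intro z hz
  obtain ⟨hw, hphi⟩ := hψ z hz
  have hw0 : (0:ℝ) ≤ ψ z := hw
  rw [hφ _ hw] at hphi
  have hfw := hf_pos _ hw
  have hzw : z ≤ ψ z := by
    have := div_pos (hpos _ hw0) hfw
    linarith
  have eq2 : (1 - F (ψ z)) / (1 - F z)
          = Real.exp (-∫ y in z..(ψ z), f y / (1 - F y)) := by
    rw [main z _ hz hzw, neg_sub, Real.exp_sub, Real.exp_log (hpos _ hw0),
      Real.exp_log (hpos _ hz)]
  refine ⟨?_, eq2, ?_⟩
  · rw [main 0 z le_rfl hz, hF0]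
    simp [Real.exp_log (hpos z hz)]
  · rw [eq2, ge_iff_le, one_div, ← Real.exp_neg]
    apply Real.exp_le_exp.mpr
    apply neg_le_neg
    have h4 : ∫ y in z..(ψ z), f y / (1 - F y) ≤
        ∫ y in z..(ψ z), f (ψ z) / (1 - F (ψ z)) := by
      apply intervalIntegral.integral_mono_on hzw (hhint z _ hz hzw) (by simp)
      intro x hx
      exact hMHR x _ (le_trans hz hx.1) hx.2
    refine h4.trans (le_of_eq ?_)
    rw [intervalIntegral.integral_const, smul_eq_mul]
    have h5 : ψ z - z = (1 - F (ψ z)) / f (ψ z) := by linarith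
    rw [h5]
    have := (hpos _ hw0).ne'
    have := hfw.ne'
    field_simp
end
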